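/- Let H be a frustration-free Hamiltonian on a chain of n qudits as in the setup, with spectral gap γ, noncommutation degree g, L layers, coarse-grained Hamiltonian H̄(t) with gap γ(H̄(t)), coarse-grained detectability operator DL(t), and detectability-lemma operator DL(H), for a coarse-graining parameter t with 8L² < t < n/5. Then 1 − 3·γ(H̄(t)) ≤ max_{ψ ∈ G⊥, ‖ψ‖=1} ‖DL(t)ψ‖² ≤ max_{x ∈ (0, 1 − γ/(g²+γ))} step_{t/(8L), γ/(g²+γ)}(x), where step_{m,ν}(x) = T_⌈m⌉(−1 + 2x/(1−ν)) / T_⌈m⌉((1+ν)/(1−ν)) and T denotes Chebyshev polynomials of the first kind. -/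

import Mathlib

open scoped ComplexOrder
open scoped Fin.NatCast

variable {E : Type*} [NormedAddCommGroup E] [InnerProductSpace ℂ E] [FiniteDimensional ℂ E]

/-- An orthogonal projector: a self-adjoint idempotent operator. -/
def IsProjector (P : E →L[ℂ] E) : Prop := IsSelfAdjoint P ∧ P * P = P

/-- The smallest nonzero (for a positive semidefinite operator, smallest positive)
eigenvalue of an operator. -/
noncomputable def minNonzeroEig (A : E →L[ℂ] E) : ℝ :=
  sInf {c : ℝ | 0 < c ∧ ∃ v : E, v ≠ 0 ∧ A v = (c : ℂ) • v}

/-- The Loewner order: `A ⪯ B` iff `B − A` is positive semidefinite. -/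
def Loewner (A B : E →L[ℂ] E) : Prop := (B - A).IsPositive

/-- The contiguous (cyclic) segment of `t` qudits starting at qudit `a` of the chain. -/
def seg {n : ℕ} [NeZero n] (a : Fin n) (t : ℕ) : Finset (Fin n) :=
  (Finset.range t).image (fun k : ℕ => a + (k : Fin n))

/-- The bond `(i, i+1)` lies inside the region `F`. -/
def bondIn {n : ℕ} [NeZero n] (i : Fin n) (F : Finset (Fin n)) : Prop := i ∈ F ∧ i + 1 ∈ F

instance {n : ℕ} [NeZero n] (F : Finset (Fin n)) : DecidablePred (fun i => bondIn i F) :=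
  fun i => inferInstanceAs (Decidable (i ∈ F ∧ i + 1 ∈ F))

/-- A frustration-free nearest-neighbour Hamiltonian `H = Σ_{i=1}^n H_i`,
`H_i = Σ_j P_{ij}`, on a (cyclic) chain of `n` qudits whose joint Hilbert space is `E`:
the `P_{ij}` are orthogonal projectors supported on the qudits `i, i+1`, each failing to
commute with at most `g` other members of the family, and the family is partitioned into
`L` layers of pairwise commuting projectors. -/
structure ChainSetup (n : ℕ) [NeZero n] (E : Type*) [NormedAddCommGroup E]
    [InnerProductSpace ℂ E] [FiniteDimensional ℂ E] where
  /-- the number of projectors making up the interaction `H_i` on the bond `(i, i+1)` -/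
  m : Fin n → ℕ
  /-- the projectors `P_{ij}`, supported on the qudits `i, i+1` -/
  P : (i : Fin n) → Fin (m i) → (E →L[ℂ] E)
  /-- the noncommutation degree -/
  g : ℕ
  /-- the number of layers -/
  L : ℕ
  /-- the assignment of each projector to a layer -/
  layer : ((i : Fin n) × Fin (m i)) → Fin L
  proj : ∀ i j, IsProjector (P i j)
  /-- operational form of two-body locality: interactions on disjoint bonds commute -/
  locality : ∀ (i i' : Fin n) (j : Fin (m i)) (j' : Fin (m i')),
    Disjoint ({i, i + 1} : Finset (Fin n)) ({i', i' + 1} : Finset (Fin n)) →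
    Commute (P i j) (P i' j')
  /-- each projector fails to commute with at most `g` other members of the family -/
  gbound : ∀ p : (i : Fin n) × Fin (m i),
    Nat.card {q : (i : Fin n) × Fin (m i) // q ≠ p ∧ ¬ Commute (P p.1 p.2) (P q.1 q.2)} ≤ g
  /-- projectors within each layer pairwise commute -/
  layers : ∀ p q : (i : Fin n) × Fin (m i), layer p = layer q →
    Commute (P p.1 p.2) (P q.1 q.2)
  /-- frustration-freeness: there is a nonzero state annihilated by every `P_{ij}` -/
  frustFree : ∃ v : E, v ≠ 0 ∧ ∀ i j, P i j v = 0

namespace ChainSetup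

variable {n : ℕ} [NeZero n]

/-- the bond interaction `H_i = Σ_j P_{ij}` -/
noncomputable def Hbond (C : ChainSetup n E) (i : Fin n) : E →L[ℂ] E := ∑ j, C.P i j

/-- the full Hamiltonian `H = Σ_i H_i` -/
noncomputable def Hfull (C : ChainSetup n E) : E →L[ℂ] E := ∑ i, C.Hbond i

/-- `h_F = Σ_{i : i,i+1 ∈ F} H_i`, the Hamiltonian restricted to the region `F` -/
noncomputable def hamOn (C : ChainSetup n E) (F : Finset (Fin n)) : E →L[ℂ] E :=
  ∑ i ∈ Finset.univ.filter (fun i => bondIn i F), C.Hbond i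

/-- the spectral gap `γ` of `H` -/
noncomputable def gap (C : ChainSetup n E) : ℝ := minNonzeroEig C.Hfull

/-- The local gap `γ(t)`: the minimum of the spectral gaps of `h_S` over contiguous
segments `S` of length `t`.  For the open chain (`openBC = true`) only segments that do
not wrap around the end of the chain are allowed. -/
noncomputable def localGap (C : ChainSetup n E) (openBC : Bool) (t : ℕ) : ℝ :=
  sInf {x : ℝ | ∃ a : Fin n, (openBC = true → (a : ℕ) + t ≤ n) ∧
    x = minNonzeroEig (C.hamOn (seg a t))}

/-- `Q_F`: the orthogonal projector onto the orthogonal complement of the ground space of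
`h_F` (for `F = ∅` this is `0`). -/
noncomputable def Qproj (C : ChainSetup n E) (F : Finset (Fin n)) : E →L[ℂ] E :=
  (LinearMap.ker (C.hamOn F : E →ₗ[ℂ] E))ᗮ.subtypeL ∘L
    Submodule.orthogonalProjectionOnto (LinearMap.ker (C.hamOn F : E →ₗ[ℂ] E))ᗮ

end ChainSetup

/-- the cyclic successor on `Fin M` -/
def cyc {M : ℕ} (k : Fin M) : Fin M := ⟨((k : ℕ) + 1) % M, Nat.mod_lt _ k.pos⟩

/-- A coarse-graining configuration with parameter `t` on a chain of `n` qudits: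
`⌊n/t⌋` pairwise disjoint contiguous segments `S_k = seg (s k) t` of length `t` in cyclic
order, with `r_k ≤ t/4` qudits between consecutive segments, and pairwise disjoint
contiguous segments `T_k` of length `t` placed between consecutive `S`-segments, each
overlapping `S_k` and `S_{k+1}` in at least `⌊t/4⌋` qudits.  For the open chain, exactly the
last `T`-segment is empty, `S_1` starts at the first qudit and `S_{⌊n/t⌋}` ends at the last
qudit. -/
structure CoarseGraining (n : ℕ) [NeZero n] (t : ℕ) where
  /-- the number of `S`-segments, `⌊n/t⌋` -/
  M : ℕ
  hM : M = n / t
  hMpos : 0 < M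
  /-- the starting points of the `S`-segments -/
  s : Fin M → Fin n
  /-- the numbers `r_k` of qudits sandwiched between consecutive `S`-segments -/
  r : Fin M → ℕ
  hr : ∀ k, 4 * r k ≤ t
  /-- the `S`-segments appear in cyclic order, `S_{k+1}` starting `t + r_k` after `S_k` -/
  hs : ∀ k : Fin M, s (cyc k) = s k + ((t + r k : ℕ) : Fin n)
  hSdisj : ∀ k l : Fin M, k ≠ l → Disjoint (seg (s k) t) (seg (s l) t)
  /-- the `T`-segments -/
  T : Fin M → Finset (Fin n)
  hT : ∀ k, (∃ a : Fin n, T k = seg a t) ∨ T k = ∅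
  hTdisj : ∀ k l : Fin M, k ≠ l → Disjoint (T k) (T l)
  hoverlap₁ : ∀ k, T k ≠ ∅ → t / 4 ≤ ((seg (s k) t) ∩ T k).card
  hoverlap₂ : ∀ k, T k ≠ ∅ → t / 4 ≤ ((seg (s (cyc k)) t) ∩ T k).card
  /-- only the last `T`-segment may be empty (the open-chain case), and in that case
  `S_1` starts at the first qudit and `S_M` ends at the last qudit -/
  hTempty : ∀ k, T k = ∅ → (k : ℕ) = M - 1 ∧ (s ⟨0, hMpos⟩ : ℕ) = 0 ∧
    (s ⟨M - 1, Nat.sub_lt hMpos one_pos⟩ : ℕ) + t = n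

namespace ChainSetup

variable {n : ℕ} [NeZero n]

/-- the coarse-grained Hamiltonian `H̄(t) = Σ_k (Q_{S_k} + Q_{T_k})` -/
noncomputable def coarseHam (C : ChainSetup n E) (t : ℕ) (G : CoarseGraining n t) :
    E →L[ℂ] E :=
  ∑ k, (C.Qproj (seg (G.s k) t) + C.Qproj (G.T k))

/-- the coarse-grained detectability operator
`DL(t) = (∏_k (1 − Q_{S_k}))·(∏_k (1 − Q_{T_k}))` -/
noncomputable def coarseDL (C : ChainSetup n E) (t : ℕ) (G : CoarseGraining n t) :
    E →L[ℂ] E :=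
  ((List.finRange G.M).map (fun k => 1 - C.Qproj (seg (G.s k) t))).prod *
    ((List.finRange G.M).map (fun k => 1 - C.Qproj (G.T k))).prod

/-- the detectability-lemma operator `DL(H) = ∏_{α=1}^L ∏_{(i,j) ∈ T_α} (1 − P_{ij})`,
taken layer by layer -/
noncomputable def DLHam (C : ChainSetup n E) : E →L[ℂ] E :=
  ((List.finRange C.L).map (fun α =>
    (Finset.univ.filter (fun p : (i : Fin n) × Fin (C.m i) => C.layer p = α)).noncommProd
      (fun p => 1 - C.P p.1 p.2)
      (fun p hp q hq _ =>
        Commute.sub_left (Commute.one_left _)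
          (Commute.sub_right (Commute.one_right _)
            (C.layers p q (by
              simp only [Finset.coe_filter, Set.mem_setOf_eq] at hp hq
              rw [hp.2, hq.2])))))).prod

end ChainSetup

/-- The polynomial `step_{m,ν}(x) = T_⌈m⌉(−1 + 2x/(1−ν)) / T_⌈m⌉((1+ν)/(1−ν))`,
where `T_k` is the Chebyshev polynomial of the first kind. -/
noncomputable def stepPoly (m ν : ℝ) (x : ℝ) : ℝ :=
  (Polynomial.Chebyshev.T ℝ ⌈m⌉).eval (-1 + 2 * x / (1 - ν)) /
    (Polynomial.Chebyshev.T ℝ ⌈m⌉).eval ((1 + ν) / (1 - ν))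

/-!
Write `D = DL(H)` and `ν = γ/(g² + γ)`, and let `P_S = ∏_k (1 - Q_{S_k})` and
`P_T = ∏_k (1 - Q_{T_k})`, so that `DL(t) = P_S P_T`.

Lower bound: for commuting projections `1 - ∏_k (1 - Q_k) ≤ ∑_k Q_k`, and `‖x‖² - ‖P_S P_T x‖²` is
at most `3 (‖(1 - P_S) x‖² + ‖(1 - P_T) x‖²)`; apply both to a unit eigenvector of `H̄(t)` for its
smallest nonzero eigenvalue that is orthogonal to `G`, if there is one, and to a unit vector of
`ker H̄(t) ∩ G⊥` otherwise.

Upper bound: the detectability lemma gives `‖D x‖² ≤ (1 - ν) ‖x‖²` on `G⊥`. A factor of `D` whose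
bond lies in some `S_k` is absorbed by `P_S`, unless the factors standing before it prevent it from
moving to the left; each further layer lets such an obstruction spread by at most one bond. The
factors that survive in `P_S (D†D)^q` therefore lie near the gaps between the `S_k`, hence inside
the `T_k` as long as `q ≤ ⌈t/(8L)⌉`, and they are absorbed by `P_T`. So `P_S (D†D)^q P_T = P_S P_T`,
and any polynomial in `D†D` of degree at most `⌈t/(8L)⌉` with value `1` at `1` may be inserted
between `P_S` and `P_T`. The Chebyshev step polynomial is small on `[0, 1 - ν]`.
-/

section StarProjection

variable {𝕜 V : Type*} [RCLike 𝕜] [NormedAddCommGroup V] [InnerProductSpace 𝕜 V] [CompleteSpace V]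
  {P Q : V →L[𝕜] V}

theorem norm_apply_le_of_isStarProjection (hP : IsStarProjection P) (x : V) : ‖P x‖ ≤ ‖x‖ :=
  P.le_of_opNorm_le hP.norm_le x |>.trans_eq (one_mul _)

theorem norm_sq_apply_add_norm_sq_one_sub_apply (hP : IsStarProjection P) (x : V) :
    ‖P x‖ ^ 2 + ‖(1 - P) x‖ ^ 2 = ‖x‖ ^ 2 := by
  obtain ⟨U, _, rfl⟩ := isStarProjection_iff_eq_starProjection.1 hP
  rw [U.norm_sq_eq_add_norm_sq_starProjection x, U.starProjection_orthogonal']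

theorem re_inner_apply_self_of_isStarProjection (hP : IsStarProjection P) (x : V) :
    RCLike.re (inner 𝕜 x (P x)) = ‖P x‖ ^ 2 := by
  obtain ⟨U, _, rfl⟩ := isStarProjection_iff_eq_starProjection.1 hP
  rw [inner_re_symm, U.re_inner_starProjection_eq_normSq x]
  rfl

theorem norm_sq_sub_norm_sq_mul_apply_le (hP : IsStarProjection P) (hQ : IsStarProjection Q)
    (x : V) :
    ‖x‖ ^ 2 - ‖(P * Q) x‖ ^ 2 ≤ 3 * (‖(1 - P) x‖ ^ 2 + ‖(1 - Q) x‖ ^ 2) := by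
  have pythagoras_Q := norm_sq_apply_add_norm_sq_one_sub_apply hQ x
  have pythagoras_P := norm_sq_apply_add_norm_sq_one_sub_apply hP (Q x)
  have split : (1 - P) (Q x) = (1 - P) x - (1 - P) ((1 - Q) x) := by
    rw [← map_sub]
    simp
  have triangle : ‖(1 - P) (Q x)‖ ≤ ‖(1 - P) x‖ + ‖(1 - Q) x‖ := by
    rw [split]
    exact (norm_sub_le _ _).trans
      (by gcongr; exact norm_apply_le_of_isStarProjection hP.one_sub _)
  have : ‖(1 - P) (Q x)‖ ^ 2 ≤ (‖(1 - P) x‖ + ‖(1 - Q) x‖) ^ 2 := by gcongr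
  rw [mul_apply_eq_comp]
  nlinarith [sq_nonneg (‖(1 - P) x‖ - ‖(1 - Q) x‖), sq_nonneg ‖(1 - P) x‖]

theorem IsProjector.isStarProjection {P : E →L[ℂ] E} (hP : IsProjector P) : IsStarProjection P :=
  ⟨hP.2, hP.1⟩

end StarProjection

section ComplProd

variable {A ι : Type*} [Ring A] (P : ι → A) (a : ι) (w : List ι)

/-- The ordered product `∏ (1 - P k)` over a word `w` of indices, leftmost letter first: the common
form of all the detectability operators. -/
def complProd : A :=
  (w.map fun k => 1 - P k).prod

@[simp]
theorem complProd_nil : complProd P [] = 1 := rfl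

theorem complProd_cons : complProd P (a :: w) = (1 - P a) * complProd P w :=
  List.prod_cons

variable {P a w}

theorem commute_complProd_right {x : A} (h : ∀ k ∈ w, Commute x (P k)) :
    Commute x (complProd P w) := by
  refine Commute.list_prod_right _ _ ?_
  simpa only [List.forall_mem_map] using fun k hk => (Commute.one_right x).sub_right (h k hk)

theorem mul_complProd_eq_zero (hidem : IsIdempotentElem (P a)) (ha : a ∈ w)
    (hcomm : ∀ k ∈ w, Commute (P a) (P k)) : P a * complProd P w = 0 := by
  induction w with
  | nil => simp at ha
  | cons b w ih =>
    rw [List.forall_mem_cons] at hcomm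
    rw [complProd_cons, ← mul_assoc]
    obtain rfl | ha := List.mem_cons.1 ha
    · rw [hidem.mul_one_sub_self, zero_mul]
    · rw [((Commute.one_right _).sub_right hcomm.1).eq, mul_assoc, ih ha hcomm.2, mul_zero]

theorem isStarProjection_complProd [StarRing A] (hP : ∀ k ∈ w, IsStarProjection (P k))
    (hcomm : ∀ k ∈ w, ∀ l ∈ w, Commute (P k) (P l)) : IsStarProjection (complProd P w) := by
  induction w with
  | nil => exact .one A
  | cons a w ih =>
    rw [List.forall_mem_cons] at hP
    have hcomm_a : Commute (P a) (complProd P w) :=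
      commute_complProd_right fun k hk => hcomm a (by simp) k (by simp [hk])
    rw [complProd_cons]
    exact hP.1.one_sub.mul
      (ih hP.2 fun k hk l hl => hcomm k (by simp [hk]) l (by simp [hl]))
      ((Commute.one_left _).sub_left hcomm_a)

end ComplProd

section ComplProdOperator

variable {𝕜 V ι : Type*} [RCLike 𝕜] [NormedAddCommGroup V] [InnerProductSpace 𝕜 V]
  {P : ι → V →L[𝕜] V} {w : List ι}

theorem complProd_apply_eq_self {x : V} (hx : ∀ k ∈ w, P k x = 0) : complProd P w x = x := by
  induction w with
  | nil => simp
  | cons a w ih =>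
    rw [List.forall_mem_cons] at hx
    simp [complProd_cons, ih hx.2, hx.1]

variable [CompleteSpace V]

theorem norm_sq_sub_norm_sq_complProd_cons_apply {a : ι} (ha : IsStarProjection (P a)) (x : V) :
    ‖x‖ ^ 2 - ‖complProd P (a :: w) x‖ ^ 2 =
      ‖P a (complProd P w x)‖ ^ 2 + (‖x‖ ^ 2 - ‖complProd P w x‖ ^ 2) := by
  rw [complProd_cons, mul_apply_eq_comp,
    ← norm_sq_apply_add_norm_sq_one_sub_apply ha (complProd P w x)]
  ring

theorem norm_sq_sub_norm_sq_complProd_apply_le_sum (hP : ∀ k ∈ w, IsStarProjection (P k))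
    (hcomm : ∀ k ∈ w, ∀ l ∈ w, Commute (P k) (P l)) (x : V) :
    ‖x‖ ^ 2 - ‖complProd P w x‖ ^ 2 ≤ (w.map fun k => ‖P k x‖ ^ 2).sum := by
  induction w with
  | nil => simp
  | cons a w ih =>
    rw [List.forall_mem_cons] at hP
    have hcomm_w : ∀ k ∈ w, ∀ l ∈ w, Commute (P k) (P l) :=
      fun k hk l hl => hcomm k (by simp [hk]) l (by simp [hl])
    have swap : P a (complProd P w x) = complProd P w (P a x) :=
      DFunLike.congr_fun (commute_complProd_right fun k hk =>
        hcomm a (by simp) k (by simp [hk])).eq x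
    have contract := norm_apply_le_of_isStarProjection
      (isStarProjection_complProd hP.2 hcomm_w) (P a x)
    rw [norm_sq_sub_norm_sq_complProd_cons_apply hP.1, swap, List.map_cons, List.sum_cons]
    gcongr
    exact ih hP.2 hcomm_w

end ComplProdOperator

section DetectabilityLemma

variable {𝕜 V ι : Type*} [RCLike 𝕜] [NormedAddCommGroup V] [InnerProductSpace 𝕜 V]
  {P : ι → V →L[𝕜] V} {w : List ι}

open Classical in
/-- The residues in the proof of the detectability lemma: to the letter `a` of the word
`w = u ++ a :: v` it assigns `‖P a (∏_v (1 - P k) x)‖`, the length of the component removed by the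
factor `1 - P a`, and to an index outside `w` it assigns `0`. -/
noncomputable def detectabilityResidue (P : ι → V →L[𝕜] V) (x : V) : List ι → ι → ℝ
  | [] => 0
  | a :: v => Function.update (detectabilityResidue P x v) a ‖P a (complProd P v x)‖

variable {a k : ι} {x : V}

theorem detectabilityResidue_nonneg : 0 ≤ detectabilityResidue P x w k := by
  classical
  induction w with
  | nil => exact le_rfl
  | cons a w ih =>
    rw [detectabilityResidue, Function.update_apply]
    split_ifs
    exacts [norm_nonneg _, ih]

theorem detectabilityResidue_of_notMem (hk : k ∉ w) : detectabilityResidue P x w k = 0 := by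
  classical
  induction w with
  | nil => rfl
  | cons a w ih =>
    rw [List.mem_cons, not_or] at hk
    rw [detectabilityResidue, Function.update_of_ne hk.1, ih hk.2]

theorem sum_detectabilityResidue_cons (s : Finset ι) (ha : a ∉ w) (haw : a ∈ s) :
    ∑ k ∈ s, detectabilityResidue P x (a :: w) k =
      ‖P a (complProd P w x)‖ + ∑ k ∈ s, detectabilityResidue P x w k := by
  classical
  rw [detectabilityResidue, Finset.sum_update_of_mem haw,
    ← Finset.sum_sdiff (Finset.singleton_subset_iff.2 haw), Finset.sum_singleton,
    detectabilityResidue_of_notMem ha, add_zero]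

variable [CompleteSpace V]

theorem sum_sq_detectabilityResidue [Fintype ι] (hP : ∀ k, IsStarProjection (P k))
    (hw : w.Nodup) (x : V) :
    ∑ k, detectabilityResidue P x w k ^ 2 = ‖x‖ ^ 2 - ‖complProd P w x‖ ^ 2 := by
  classical
  induction w with
  | nil => simp [detectabilityResidue]
  | cons a w ih =>
    rw [List.nodup_cons] at hw
    have step (k : ι) : detectabilityResidue P x (a :: w) k ^ 2 =
        (if k = a then ‖P a (complProd P w x)‖ ^ 2 else 0) + detectabilityResidue P x w k ^ 2 := by
      rw [detectabilityResidue, Function.update_apply]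
      split_ifs with h
      · rw [h, detectabilityResidue_of_notMem hw.1, zero_pow two_ne_zero, add_zero]
      · rw [zero_add]
    rw [norm_sq_sub_norm_sq_complProd_cons_apply (hP a), ← ih hw.2]
    simp only [step, Finset.sum_add_distrib, Finset.sum_ite_eq', Finset.mem_univ, if_true]

theorem norm_apply_one_sub_apply_le_of_commute {p a : ι} (ha : IsStarProjection (P a))
    (hcomm : Commute (P p) (P a)) (x : V) : ‖P p ((1 - P a) x)‖ ≤ ‖P p x‖ := by
  have swap : P p ((1 - P a) x) = (1 - P a) (P p x) :=
    DFunLike.congr_fun ((Commute.one_right _).sub_right hcomm).eq x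
  exact swap ▸ norm_apply_le_of_isStarProjection ha.one_sub _

open Classical in
theorem norm_apply_complProd_apply_le_sum_detectabilityResidue [Fintype ι]
    (hP : ∀ k, IsStarProjection (P k)) (hw : w.Nodup) {p : ι} (hp : p ∈ w) (x : V) :
    ‖P p (complProd P w x)‖ ≤
      ∑ k with ¬ Commute (P p) (P k), detectabilityResidue P x w k := by
  induction w with
  | nil => simp at hp
  | cons a w ih =>
    rw [List.nodup_cons] at hw
    set y := complProd P w x
    have unfold : complProd P (a :: w) x = (1 - P a) y := by rw [complProd_cons]; rfl
    rw [unfold]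
    obtain rfl | hp := List.mem_cons.1 hp
    · have vanish : P p ((1 - P p) y) = 0 := DFunLike.congr_fun (hP p).mul_one_sub_self y
      rw [vanish, norm_zero]
      exact Finset.sum_nonneg fun _ _ => detectabilityResidue_nonneg
    by_cases hcomm : Commute (P p) (P a)
    · calc ‖P p ((1 - P a) y)‖ ≤ ‖P p y‖ := norm_apply_one_sub_apply_le_of_commute (hP a) hcomm y
        _ ≤ ∑ k with ¬ Commute (P p) (P k), detectabilityResidue P x w k := ih hw.2 hp
        _ = ∑ k with ¬ Commute (P p) (P k), detectabilityResidue P x (a :: w) k := by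
          rw [detectabilityResidue, Finset.sum_update_of_notMem (by simpa using hcomm)]
    · calc ‖P p ((1 - P a) y)‖ = ‖P p y - P p (P a y)‖ := by simp
        _ ≤ ‖P p y‖ + ‖P p (P a y)‖ := norm_sub_le _ _
        _ ≤ ‖P a y‖ + ∑ k with ¬ Commute (P p) (P k), detectabilityResidue P x w k := by
          rw [add_comm]
          exact add_le_add (norm_apply_le_of_isStarProjection (hP p) _) (ih hw.2 hp)
        _ = ∑ k with ¬ Commute (P p) (P k), detectabilityResidue P x (a :: w) k :=
          (sum_detectabilityResidue_cons _ hw.1 (by simpa using hcomm)).symm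

theorem detectability_lemma [Fintype ι] (hP : ∀ k, IsStarProjection (P k))
    {g : ℕ} (hg : ∀ p, Nat.card {q // ¬ Commute (P p) (P q)} ≤ g)
    (hw : w.Nodup) (hmem : ∀ p, p ∈ w) (x : V) :
    ∑ p, ‖P p (complProd P w x)‖ ^ 2 ≤ g ^ 2 * (‖x‖ ^ 2 - ‖complProd P w x‖ ^ 2) := by
  classical
  have card_le (p : ι) : (Finset.univ.filter fun q => ¬ Commute (P p) (P q)).card ≤ g := by
    rw [← Fintype.card_subtype, ← Nat.card_eq_fintype_card]
    exact hg p
  set ρ := detectabilityResidue P x w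
  have cauchy_schwarz (p : ι) :
      ‖P p (complProd P w x)‖ ^ 2 ≤ g * ∑ q with ¬ Commute (P p) (P q), ρ q ^ 2 :=
    calc ‖P p (complProd P w x)‖ ^ 2 ≤ (∑ q with ¬ Commute (P p) (P q), ρ q) ^ 2 := by
          gcongr
          exact norm_apply_complProd_apply_le_sum_detectabilityResidue hP hw (hmem p) x
      _ ≤ _ := sq_sum_le_card_mul_sum_sq
      _ ≤ _ := by gcongr; exact card_le p
  calc ∑ p, ‖P p (complProd P w x)‖ ^ 2
      ≤ ∑ p, g * ∑ q with ¬ Commute (P p) (P q), ρ q ^ 2 :=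
        Finset.sum_le_sum fun p _ => cauchy_schwarz p
    _ = g * ∑ q, ∑ p with ¬ Commute (P q) (P p), ρ q ^ 2 := by
        rw [← Finset.mul_sum, Finset.sum_comm' (t' := Finset.univ)
          (s' := fun q => Finset.univ.filter fun p => ¬ Commute (P q) (P p))
          (by simp [Commute.symm_iff])]
    _ ≤ g * ∑ q, g * ρ q ^ 2 := by
        gcongr with q
        rw [Finset.sum_const, nsmul_eq_mul]
        gcongr
        exact card_le q
    _ = g ^ 2 * (‖x‖ ^ 2 - ‖complProd P w x‖ ^ 2) := by
        rw [← Finset.mul_sum, sum_sq_detectabilityResidue hP hw, ← mul_assoc, ← sq]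

end DetectabilityLemma

section Eigenvectors

open Polynomial

variable {V : Type*} [NormedAddCommGroup V] [InnerProductSpace ℂ V] {A : V →L[ℂ] V} {v : V} {x : ℝ}

theorem norm_sq_sum_smul_of_orthonormal {ι : Type*} [Fintype ι] {b : ι → V}
    (hb : Orthonormal ℂ b) (c : ι → ℂ) : ‖∑ i, c i • b i‖ ^ 2 = ∑ i, ‖c i‖ ^ 2 := by
  rw [← inner_self_eq_norm_sq (𝕜 := ℂ), hb.inner_sum, map_sum]
  simp [Complex.conj_mul', ← Complex.ofReal_pow]

theorem aeval_apply_of_apply_eq_smul (hv : A v = (x : ℂ) • v) (p : ℝ[X]) :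
    aeval A p v = ((p.eval x : ℝ) : ℂ) • v := by
  induction p using Polynomial.induction_on' with
  | add p q hp hq => simp [hp, hq, add_smul]
  | monomial k a =>
    have pow : (A ^ k) v = (x : ℂ) ^ k • v := by
      induction k with
      | zero => simp
      | succ k ih => rw [pow_succ', mul_apply_eq_comp, ih, map_smul, hv, smul_smul, pow_succ]
    rw [aeval_monomial, mul_apply_eq_comp, pow, Algebra.algebraMap_eq_smul_one]
    simp [mul_smul, ← Complex.coe_smul, smul_comm ((x : ℂ) ^ k)]

theorem apply_mem_orthogonal_ker (hA : A.IsSymmetric) (v : V) :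
    A v ∈ (LinearMap.ker (A : V →ₗ[ℂ] V))ᗮ := by
  refine (Submodule.mem_orthogonal _ _).2 fun u (hu : A u = 0) => ?_
  calc inner ℂ u (A v) = inner ℂ (A u) v := (hA u v).symm
    _ = 0 := by rw [hu, inner_zero_left]

theorem eigenvalue_pos_of_mem_orthogonal_ker (hA : A.IsPositive) (hv0 : v ≠ 0)
    (hv : v ∈ (LinearMap.ker (A : V →ₗ[ℂ] V))ᗮ) (hx : A v = (x : ℂ) • v) : 0 < x := by
  have rayleigh : RCLike.re (inner ℂ v (A v)) = x * ‖v‖ ^ 2 := by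
    rw [hx, inner_smul_right, inner_self_eq_norm_sq_to_K]
    simp [← Complex.ofReal_pow]
  have nonneg : 0 ≤ x :=
    nonneg_of_mul_nonneg_left (rayleigh ▸ hA.re_inner_nonneg_right v) (by positivity)
  refine nonneg.lt_of_ne' fun hx0 => hv0 ?_
  have ker : v ∈ LinearMap.ker (A : V →ₗ[ℂ] V) := by simp [hx, hx0]
  exact inner_self_eq_zero.1 ((Submodule.mem_orthogonal _ _).1 hv v ker)

theorem minNonzeroEig_le (hx : 0 < x) (hv0 : v ≠ 0) (hv : A v = (x : ℂ) • v) :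
    minNonzeroEig A ≤ x :=
  csInf_le ⟨0, fun _ h => h.1.le⟩ ⟨hx, v, hv0, hv⟩

theorem minNonzeroEig_zero : minNonzeroEig (0 : V →L[ℂ] V) = 0 := by
  refine (congrArg sInf (Set.eq_empty_of_forall_notMem ?_)).trans Real.sInf_empty
  rintro x ⟨hx, v, hv0, hv⟩
  exact hv0 ((smul_eq_zero.1 hv.symm).resolve_left (by exact_mod_cast hx.ne'))

end Eigenvectors

section Spectrum

open Polynomial

variable {K : E →L[ℂ] E} {U : Submodule ℂ E} {φ : E}

theorem exists_orthonormal_eigenvector_expansion (hK : IsSelfAdjoint K) (hU : ∀ v ∈ U, K v ∈ U)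
    (hφ : φ ∈ U) :
    ∃ (m : ℕ) (b : Fin m → E) (x : Fin m → ℝ) (c : Fin m → ℂ), Orthonormal ℂ b ∧
      (∀ i, b i ∈ U) ∧ (∀ i, K (b i) = (x i : ℂ) • b i) ∧ φ = ∑ i, c i • b i := by
  have hsymm := (ContinuousLinearMap.isSelfAdjoint_iff_isSymmetric.1 hK).restrict_invariant hU
  let b := hsymm.eigenvectorBasis rfl
  refine ⟨_, fun i => b i, hsymm.eigenvalues rfl, fun i => inner ℂ (b i) ⟨φ, hφ⟩,
    b.orthonormal.comp_linearIsometry U.subtypeₗᵢ, fun i => (b i).2, fun i =>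
      congrArg Subtype.val (hsymm.apply_eigenvectorBasis rfl i), ?_⟩
  simpa using congrArg U.subtype (b.sum_repr' ⟨φ, hφ⟩).symm

theorem norm_aeval_apply_le (hK : IsSelfAdjoint K) (hU : ∀ v ∈ U, K v ∈ U) {p : ℝ[X]} {c : ℝ}
    (hc : 0 ≤ c) (hp : ∀ x : ℝ, (∃ v ∈ U, v ≠ 0 ∧ K v = (x : ℂ) • v) → |p.eval x| ≤ c)
    (hφ : φ ∈ U) : ‖aeval K p φ‖ ≤ c * ‖φ‖ := by
  obtain ⟨m, b, x, a, hb, hbU, hKb, rfl⟩ := exists_orthonormal_eigenvector_expansion hK hU hφ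
  have eval_le (i) : |p.eval (x i)| ≤ c := hp (x i) ⟨b i, hbU i, hb.ne_zero i, hKb i⟩
  have image : aeval K p (∑ i, a i • b i) = ∑ i, (a i * (p.eval (x i) : ℝ)) • b i := by
    simp only [map_sum, map_smul, aeval_apply_of_apply_eq_smul (hKb _), smul_smul]
  rw [← sq_le_sq₀ (norm_nonneg _) (by positivity), mul_pow, image,
    norm_sq_sum_smul_of_orthonormal hb, norm_sq_sum_smul_of_orthonormal hb, Finset.mul_sum]
  gcongr with i
  rw [norm_mul, mul_pow, mul_comm, Complex.norm_real, Real.norm_eq_abs]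
  gcongr
  exact eval_le i

end Spectrum

section MinNonzeroEig

variable {A : E →L[ℂ] E} {φ : E}

theorem finite_setOf_pos_eigenvalue (A : E →L[ℂ] E) :
    {x : ℝ | 0 < x ∧ ∃ v : E, v ≠ 0 ∧ A v = (x : ℂ) • v}.Finite := by
  refine ((Module.End.finite_hasEigenvalue (A : E →ₗ[ℂ] E)).preimage
    Complex.ofReal_injective.injOn).subset ?_
  rintro x ⟨-, v, hv0, hv⟩
  exact Module.End.hasEigenvalue_of_hasEigenvector
    (Module.End.hasEigenvector_iff.2 ⟨Module.End.mem_eigenspace_iff.2 hv, hv0⟩)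

theorem minNonzeroEig_mem (hA : A.IsPositive) (hA0 : A ≠ 0) :
    0 < minNonzeroEig A ∧ ∃ v : E, v ≠ 0 ∧ A v = (minNonzeroEig A : ℂ) • v := by
  refine Set.Nonempty.csInf_mem ?_ (finite_setOf_pos_eigenvalue A)
  obtain ⟨w, hw⟩ := DFunLike.exists_ne hA0
  obtain ⟨m, b, x, c, hb, hbU, hAb, expand⟩ := exists_orthonormal_eigenvector_expansion
    hA.isSelfAdjoint (fun v _ => apply_mem_orthogonal_ker hA.isSymmetric v)
    (apply_mem_orthogonal_ker hA.isSymmetric w)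
  obtain ⟨i, -, -⟩ : ∃ i ∈ Finset.univ, c i • b i ≠ 0 :=
    Finset.exists_ne_zero_of_sum_ne_zero (expand ▸ hw)
  exact ⟨x i, eigenvalue_pos_of_mem_orthogonal_ker hA (hb.ne_zero i) (hbU i) (hAb i), b i,
    hb.ne_zero i, hAb i⟩

theorem minNonzeroEig_mul_norm_sq_le (hA : A.IsPositive)
    (hφ : φ ∈ (LinearMap.ker (A : E →ₗ[ℂ] E))ᗮ) :
    minNonzeroEig A * ‖φ‖ ^ 2 ≤ RCLike.re (inner ℂ φ (A φ)) := by
  obtain ⟨m, b, x, c, hb, hbU, hAb, rfl⟩ := exists_orthonormal_eigenvector_expansion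
    hA.isSelfAdjoint (fun v _ => apply_mem_orthogonal_ker hA.isSymmetric v) hφ
  have image : A (∑ i, c i • b i) = ∑ i, (c i * x i) • b i := by
    simp only [map_sum, map_smul, hAb, smul_smul]
  have rayleigh : RCLike.re (inner ℂ (∑ i, c i • b i) (A (∑ i, c i • b i))) =
      ∑ i, x i * ‖c i‖ ^ 2 := by
    rw [image, hb.inner_sum, map_sum]
    refine Finset.sum_congr rfl fun i _ => ?_
    rw [← mul_assoc, Complex.conj_mul', ← Complex.ofReal_pow, ← Complex.ofReal_mul, mul_comm]
    exact Complex.ofReal_re _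
  rw [rayleigh, norm_sq_sum_smul_of_orthonormal hb, Finset.mul_sum]
  gcongr with i
  exact minNonzeroEig_le (eigenvalue_pos_of_mem_orthogonal_ker hA (hb.ne_zero i) (hbU i) (hAb i))
    (hb.ne_zero i) (hAb i)

theorem exists_norm_eq_one_apply_eq_minNonzeroEig_smul (hA : A.IsPositive) {U : Submodule ℂ E}
    (hU : U ≤ LinearMap.ker (A : E →ₗ[ℂ] E)) (hUtop : U ≠ ⊤) :
    ∃ ψ ∈ Uᗮ, ‖ψ‖ = 1 ∧ A ψ = (minNonzeroEig A : ℂ) • ψ := by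
  suffices ∃ ψ ∈ Uᗮ, ψ ≠ 0 ∧ A ψ = (minNonzeroEig A : ℂ) • ψ by
    obtain ⟨ψ, hψ, hψ0, hAψ⟩ := this
    refine ⟨(‖ψ‖⁻¹ : ℂ) • ψ, Submodule.smul_mem _ _ hψ, norm_smul_inv_norm hψ0, ?_⟩
    rw [map_smul, hAψ, smul_comm]
  obtain rfl | hA0 := eq_or_ne A 0
  · obtain ⟨ψ, hψ, hψ0⟩ := Submodule.exists_mem_ne_zero_of_ne_bot
      (mt Submodule.orthogonal_eq_bot_iff.1 hUtop)
    exact ⟨ψ, hψ, hψ0, by simp [minNonzeroEig_zero]⟩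
  · obtain ⟨pos, ψ, hψ0, hAψ⟩ := minNonzeroEig_mem hA hA0
    have range : ψ = A ((minNonzeroEig A : ℂ)⁻¹ • ψ) := by
      rw [map_smul, hAψ, inv_smul_smul₀ (by exact_mod_cast pos.ne')]
    exact ⟨ψ, Submodule.orthogonal_le hU (range ▸ apply_mem_orthogonal_ker hA.isSymmetric _),
      hψ0, hAψ⟩

end MinNonzeroEig

section LightCone

variable {A ι Λ : Type*} [Ring A] {P : ι → A} {w : List ι}

theorem mul_complProd_eq_self {x : A} (h : ∀ k ∈ w, x * P k = 0) : x * complProd P w = x := by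
  induction w with
  | nil => simp
  | cons a w ih =>
    rw [List.forall_mem_cons] at h
    rw [complProd_cons, ← mul_assoc, mul_sub, mul_one, h.1, sub_zero, ih h.2]

theorem complProd_mul_eq_self {x : A} (h : ∀ k ∈ w, P k * x = 0) : complProd P w * x = x := by
  induction w with
  | nil => simp
  | cons a w ih =>
    rw [List.forall_mem_cons] at h
    rw [complProd_cons, mul_assoc, ih h.2, sub_mul, one_mul, h.1, sub_zero]

theorem complProd_append (u v : List ι) :
    complProd P (u ++ v) = complProd P u * complProd P v := by
  simp [complProd]

theorem complProd_flatMap (Y : Λ → List ι) (ℓ : List Λ) :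
    complProd P (ℓ.flatMap Y) = (ℓ.map fun α => complProd P (Y α)).prod := by
  induction ℓ with
  | nil => rfl
  | cons α ℓ ih => rw [List.flatMap_cons, complProd_append, ih, List.map_cons, List.prod_cons]

theorem complProd_eq_filter_mul_filter_not (hcomm : ∀ k ∈ w, ∀ l ∈ w, Commute (P k) (P l))
    (p : ι → Bool) :
    complProd P w = complProd P (w.filter p) * complProd P (w.filter fun k => !p k) := by
  rw [← complProd_append]
  refine ((List.filter_append_perm p w).symm.map fun k => 1 - P k).prod_eq' ?_
  refine List.pairwise_map.2 (List.pairwise_iff_forall_sublist.2 fun {k l} hkl => ?_)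
  have h : Commute (P k) (P l) := hcomm k (hkl.subset (by simp)) l (hkl.subset (by simp))
  exact (Commute.one_left _).sub_left ((Commute.one_right _).sub_right h)

-- Each factor outside the light cone commutes to the left through the factors kept so far and is
-- absorbed by `S`.
theorem exists_mul_prod_layers_eq {S : A} {Y : Λ → List ι} {near : ℕ → Set ι}
    (hlayer : ∀ α, ∀ p ∈ Y α, ∀ q ∈ Y α, Commute (P p) (P q)) (hmono : Monotone near)
    (hnear : ∀ d, ∀ p ∈ near d, ∀ q ∉ near (d + 1), Commute (P p) (P q))
    (hS : ∀ p ∉ near 0, S * P p = 0) (ℓ : List Λ) :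
    ∃ v : List ι, (∀ p ∈ v, p ∈ near ℓ.length) ∧
      S * (ℓ.map fun α => complProd P (Y α)).prod = S * complProd P v := by
  classical
  induction ℓ using List.reverseRecOn with
  | nil => exact ⟨[], by simp⟩
  | append_singleton ℓ α ih =>
    obtain ⟨v, hv, ih⟩ := ih
    let far : ι → Bool := fun p => p ∉ near (ℓ.length + 1)
    set F := complProd P ((Y α).filter far)
    set N := complProd P ((Y α).filter fun p => !far p)
    have absorb : S * F = S := mul_complProd_eq_self fun p hp =>
      hS p fun h => by simpa [far, hmono (Nat.zero_le _) h] using (List.mem_filter.1 hp).2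
    have swap : complProd P v * F = F * complProd P v := by
      refine (commute_complProd_right fun q hq => ?_).eq
      refine (commute_complProd_right fun p hp => ?_).symm
      exact (hnear _ p (hv p hp) q (by simpa [far] using (List.mem_filter.1 hq).2)).symm
    refine ⟨v ++ (Y α).filter fun p => !far p, fun p hp => ?_, ?_⟩
    · rw [List.length_append, List.length_singleton]
      rcases List.mem_append.1 hp with hp | hp
      · exact hmono (Nat.le_succ _) (hv p hp)
      · simpa [far] using (List.mem_filter.1 hp).2
    calc S * ((ℓ ++ [α]).map fun α => complProd P (Y α)).prod
        = S * (ℓ.map fun α => complProd P (Y α)).prod * complProd P (Y α) := by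
          simp [mul_assoc]
      _ = S * (complProd P v * F) * N := by
          rw [ih, complProd_eq_filter_mul_filter_not (hlayer α) far, ← mul_assoc, mul_assoc S]
      _ = S * complProd P (v ++ (Y α).filter fun p => !far p) := by
          rw [swap, ← mul_assoc, absorb, complProd_append, mul_assoc]

theorem mul_prod_layers_mul_eq {S B : A} {Y : Λ → List ι} {near : ℕ → Set ι}
    (hlayer : ∀ α, ∀ p ∈ Y α, ∀ q ∈ Y α, Commute (P p) (P q)) (hmono : Monotone near)
    (hnear : ∀ d, ∀ p ∈ near d, ∀ q ∉ near (d + 1), Commute (P p) (P q))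
    (hS : ∀ p ∉ near 0, S * P p = 0) (ℓ : List Λ) (hB : ∀ p ∈ near ℓ.length, P p * B = 0) :
    S * (ℓ.map fun α => complProd P (Y α)).prod * B = S * B := by
  obtain ⟨v, hv, h⟩ := exists_mul_prod_layers_eq hlayer hmono hnear hS ℓ
  rw [h, mul_assoc, complProd_mul_eq_self fun p hp => hB p (hv p hp)]

end LightCone

section PalindromicPower

variable {M Λ : Type*} [Monoid M]

theorem star_prod_map_of_isSelfAdjoint [StarMul M] {y : Λ → M} (hy : ∀ α, IsSelfAdjoint (y α))
    (u : List Λ) : star (u.map y).prod = (u.reverse.map y).prod := by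
  induction u with
  | nil => simp
  | cons a u ih => simp [ih, (hy a).star_eq]

theorem mul_pow_succ_of_mul_mul_eq {a z : M} (h : a * z * a = a * z) (q : ℕ) :
    (a * z) ^ (q + 1) = a * z ^ (q + 1) := by
  induction q with
  | zero => simp
  | succ q ih => rw [pow_succ', ih, ← mul_assoc, h, mul_assoc, ← pow_succ']

-- In the palindrome `u.reverse ++ u` and its powers, the equal idempotents that meet at the middle
-- and at the junctions merge, so that each power costs only `2 (u.length - 1)` factors.
theorem exists_word_prod_eq_prod_reverse_mul_prod_pow {y : Λ → M}
    (hy : ∀ α, IsIdempotentElem (y α)) (u : List Λ) (q : ℕ) :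
    ∃ ℓ : List Λ, ℓ.length ≤ 2 * (u.length - 1) * q + 1 ∧
      (ℓ.map y).prod = ((u.reverse.map y).prod * (u.map y).prod) ^ q := by
  obtain _ | ⟨a, T⟩ := u
  · exact ⟨[], by simp⟩
  obtain _ | q := q
  · exact ⟨[], by simp⟩
  set V := T.reverse ++ a :: T with hV
  have middle : ((a :: T).reverse.map y).prod * ((a :: T).map y).prod = (V.map y).prod := by
    simp only [hV, List.reverse_cons, List.map_append, List.map_cons, List.map_nil,
      List.prod_append, List.prod_cons, List.prod_nil, mul_one, mul_assoc]
    rw [← mul_assoc (y a) (y a), (hy a).eq]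
  obtain ⟨c, W, hW⟩ : ∃ c W, V = c :: W := List.exists_cons_of_ne_nil (by simp [hV])
  have palindrome : V = W.reverse ++ [c] := by
    rw [← List.reverse_cons, ← hW, hV]
    simp
  have junction : y c * (W.map y).prod * y c = y c * (W.map y).prod := by
    have : (V.map y).prod * y c = (V.map y).prod := by
      simp [palindrome, mul_assoc, (hy c).eq]
    simpa [hW] using this
  refine ⟨c :: (List.replicate (q + 1) W).flatten, ?_, ?_⟩
  · have : V.length = 2 * T.length + 1 := by simp [hV]; omega
    have : W.length = 2 * T.length := by simpa [hW] using this
    simp [this, mul_comm]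
  · have : (V.map y).prod = y c * (W.map y).prod := by simp [hW]
    rw [middle, this, mul_pow_succ_of_mul_mul_eq junction]
    simp [List.map_flatten, List.prod_flatten]

end PalindromicPower

section CyclicSegments

open scoped Fin.CommRing

variable {n : ℕ} [NeZero n] {a i j s : Fin n} {r t : ℕ}

theorem mem_seg : i ∈ seg a t ↔ ∃ k < t, a + (k : Fin n) = i := by
  simp [seg]

theorem bondIn_seg {e : ℕ} (he : e + 2 ≤ t) : bondIn (a + (e : Fin n)) (seg a t) :=
  ⟨mem_seg.2 ⟨e, by omega, rfl⟩, mem_seg.2 ⟨e + 1, by omega, by push_cast; ring⟩⟩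

theorem eq_of_natCast_fin_eq {x y : ℕ} (hx : x < n) (hy : y < n)
    (h : (x : Fin n) = (y : Fin n)) : x = y := by
  rw [← Fin.val_cast_of_lt hx, h, Fin.val_cast_of_lt hy]

theorem forall_fin_of_add_one {p : Fin n → Prop} (ha : p a) (h : ∀ i, p i → p (i + 1))
    (j : Fin n) : p j := by
  have shift (k : ℕ) : p (a + (k : Fin n)) := by
    induction k with
    | zero => simpa using ha
    | succ k ih => simpa [add_assoc] using h _ ih
  simpa using shift (j - a).val

theorem card_seg_inter_seg_add_le {b : ℕ} (hb : b + t ≤ n) :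
    (seg s t ∩ seg (s + (b : Fin n)) t).card ≤ t - b := by
  have hsub : seg s t ∩ seg (s + (b : Fin n)) t ⊆
      (Finset.Ico b t).image fun k : ℕ => s + (k : Fin n) := fun i hi => by
    obtain ⟨⟨x, hx, rfl⟩, y, hy, hxy⟩ := (Finset.mem_inter.1 hi).imp mem_seg.1 mem_seg.1
    rw [add_assoc, add_right_inj, ← Nat.cast_add] at hxy
    have := eq_of_natCast_fin_eq (by omega) (by omega) hxy
    exact Finset.mem_image_of_mem _ (Finset.mem_Ico.2 ⟨by omega, hx⟩)
  simpa using (Finset.card_le_card hsub).trans Finset.card_image_le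

theorem exists_offset_of_le_card_inter (ht : 4 ≤ t) (hn : 4 * t ≤ n) (hr : 4 * r ≤ t)
    (h₁ : t / 4 ≤ (seg s t ∩ seg a t).card)
    (h₂ : t / 4 ≤ (seg (s + ((t + r : ℕ) : Fin n)) t ∩ seg a t).card) :
    ∃ b : ℕ, a = s + (b : Fin n) ∧ r + t / 4 ≤ b ∧ b + t / 4 ≤ t := by
  have meets {s' : Fin n} (h : t / 4 ≤ (seg s' t ∩ seg a t).card) :
      ∃ x < t, ∃ y < t, s' + (x : Fin n) = a + (y : Fin n) := by
    obtain ⟨i, hi⟩ := Finset.card_pos.1 (show 0 < (seg s' t ∩ seg a t).card by omega)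
    obtain ⟨⟨x, hx, hxi⟩, y, hy, rfl⟩ := (Finset.mem_inter.1 hi).imp mem_seg.1 mem_seg.1
    exact ⟨x, hx, y, hy, hxi⟩
  obtain ⟨x, hx, y, hy, hxy⟩ := meets h₁
  obtain ⟨x', hx', y', hy', hxy'⟩ := meets h₂
  have hsum : x + y' = t + r + x' + y := by
    refine eq_of_natCast_fin_eq (n := n) (by omega) (by omega) ?_
    push_cast at hxy' ⊢
    linear_combination hxy - hxy'
  obtain ⟨b, rfl⟩ : ∃ b, x = b + y := ⟨x - y, by omega⟩
  obtain rfl : a = s + (b : Fin n) := by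
    push_cast at hxy
    linear_combination -hxy
  have hsecond : s + ((t + r : ℕ) : Fin n) = s + (b : Fin n) + ((t + r - b : ℕ) : Fin n) := by
    rw [add_assoc, ← Nat.cast_add]
    congr 2
    omega
  rw [hsecond, Finset.inter_comm] at h₂
  have := h₁.trans (card_seg_inter_seg_add_le (by omega))
  have := h₂.trans (card_seg_inter_seg_add_le (by omega))
  exact ⟨b, rfl, by omega, by omega⟩

/-- The light cone of a set `B` of bonds after `d` steps: the bonds linked to `B` by a chain of at
most `d` steps between bonds that share a qudit. -/
def bondCone (B : Set (Fin n)) : ℕ → Set (Fin n)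
  | 0 => B
  | d + 1 => {i | ∃ j ∈ bondCone B d, i = j ∨ i + 1 = j ∨ i = j + 1}

theorem monotone_bondCone (B : Set (Fin n)) : Monotone (bondCone B) :=
  monotone_nat_of_le_succ fun _ i hi => ⟨i, hi, Or.inl rfl⟩

theorem disjoint_of_notMem_bondCone {B : Set (Fin n)} {d : ℕ} (hj : j ∈ bondCone B d)
    (hi : i ∉ bondCone B (d + 1)) : Disjoint ({j, j + 1} : Finset (Fin n)) {i, i + 1} := by
  have hne : i ≠ j ∧ i + 1 ≠ j ∧ i ≠ j + 1 := by
    refine ⟨fun h => hi ⟨j, hj, .inl h⟩, fun h => hi ⟨j, hj, .inr (.inl h)⟩,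
      fun h => hi ⟨j, hj, .inr (.inr h)⟩⟩
  simp [hne]

/-- The bonds of the segment `seg a t` with at least `m` further bonds of it on either side. -/
def deepBonds (a : Fin n) (t m : ℕ) : Set (Fin n) :=
  {i | ∃ u : ℕ, m ≤ u ∧ u + m + 2 ≤ t ∧ i = a + (u : Fin n)}

theorem bondCone_subset_deepBonds {B A : Set (Fin n)} {m d : ℕ}
    (hB : B ⊆ ⋃ a ∈ A, deepBonds a t (m + d)) : bondCone B d ⊆ ⋃ a ∈ A, deepBonds a t m := by
  induction d generalizing m with
  | zero => exact hB
  | succ d ih =>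
    rintro i ⟨j, hj, hij⟩
    obtain ⟨a, ha, u, hmu, hut, rfl⟩ :=
      Set.mem_iUnion₂.1 (ih (m := m + 1) (by rwa [add_assoc, add_comm 1 d]) hj)
    refine Set.mem_iUnion₂.2 ⟨a, ha, ?_⟩
    rcases hij with rfl | hi | rfl
    · exact ⟨u, by omega, by omega, rfl⟩
    · refine ⟨u - 1, by omega, by omega, ?_⟩
      rw [Nat.cast_sub (by omega)]
      push_cast
      linear_combination hi
    · exact ⟨u + 1, by omega, by omega, by push_cast; ring⟩

namespace CoarseGraining

variable (G : CoarseGraining n t)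

theorem exists_eq_s_add (ht : 0 < t) (j : Fin n) :
    ∃ k, ∃ e < t + G.r k, j = G.s k + (e : Fin n) := by
  refine forall_fin_of_add_one (p := fun j => ∃ k, ∃ e < t + G.r k, j = G.s k + (e : Fin n))
    (a := G.s ⟨0, G.hMpos⟩) ⟨⟨0, G.hMpos⟩, 0, by omega, by simp⟩ ?_ j
  rintro _ ⟨k, e, he, rfl⟩
  obtain he | he := Nat.lt_or_eq_of_le (Nat.succ_le_of_lt he)
  · exact ⟨k, e + 1, he, by push_cast; ring⟩
  · refine ⟨cyc k, 0, by omega, ?_⟩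
    rw [G.hs, ← he]
    push_cast
    ring

theorem exists_eq_s_add_of_not_bondIn (ht : 0 < t) (hj : ∀ k, ¬ bondIn j (seg (G.s k) t)) :
    ∃ k e, t ≤ e + 1 ∧ e < t + G.r k ∧ j = G.s k + (e : Fin n) := by
  obtain ⟨k, e, he, rfl⟩ := G.exists_eq_s_add ht j
  refine ⟨k, e, ?_, he, rfl⟩
  by_contra! hlt
  exact hj k (bondIn_seg hlt)

theorem add_one_eq_zero_of_T_eq_empty {k : Fin G.M} {e : ℕ} (hn : t < n) (hk : G.T k = ∅)
    (hte : t ≤ e + 1) (he : e < t + G.r k) : G.s k + (e : Fin n) + 1 = 0 := by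
  obtain ⟨hkM, hfirst, hlast⟩ := G.hTempty k hk
  obtain rfl : k = ⟨G.M - 1, Nat.sub_lt G.hMpos one_pos⟩ := Fin.ext hkM
  set k : Fin G.M := ⟨G.M - 1, Nat.sub_lt G.hMpos one_pos⟩
  have hend : G.s k + (t : Fin n) = 0 := by
    rw [← Fin.cast_val_eq_self (G.s k), ← Nat.cast_add, hlast, Fin.natCast_self]
  have hcyc : cyc k = ⟨0, G.hMpos⟩ := Fin.ext <| by
    change (G.M - 1 + 1) % G.M = 0
    rw [Nat.sub_add_cancel G.hMpos, Nat.mod_self]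
  have hr : G.r k = 0 := by
    have := G.hr k
    refine eq_of_natCast_fin_eq (n := n) (by omega) (by omega) ?_
    have hwrap := G.hs k
    rw [hcyc, show G.s ⟨0, G.hMpos⟩ = 0 from Fin.ext hfirst] at hwrap
    push_cast at hwrap ⊢
    linear_combination -hwrap - hend
  obtain rfl : t = e + 1 := by omega
  push_cast at hend
  rw [add_assoc, hend]

theorem mem_deepBonds_of_not_bondIn (ht : 4 ≤ t) (hn : 4 * t ≤ n)
    (hj : ∀ k, ¬ bondIn j (seg (G.s k) t)) (hlast : (∃ k, G.T k = ∅) → j + 1 ≠ 0) :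
    ∃ k a, G.T k = seg a t ∧ j ∈ deepBonds a t (t / 4 - 1) := by
  obtain ⟨k, e, hte, he, rfl⟩ := G.exists_eq_s_add_of_not_bondIn (by omega) hj
  have hne : G.T k ≠ ∅ := fun hk =>
    hlast ⟨k, hk⟩ (G.add_one_eq_zero_of_T_eq_empty (by omega) hk hte he)
  obtain ⟨a, ha⟩ := (G.hT k).resolve_right hne
  have h₁ := G.hoverlap₁ k hne
  have h₂ := G.hoverlap₂ k hne
  rw [ha] at h₁
  rw [ha, G.hs] at h₂
  obtain ⟨b, rfl, hrb, hbt⟩ := exists_offset_of_le_card_inter ht hn (G.hr k) h₁ h₂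
  refine ⟨k, _, ha, e - b, by omega, by omega, ?_⟩
  rw [add_assoc, ← Nat.cast_add]
  congr 2
  omega

theorem exists_bondIn_T_of_mem_bondCone {B : Set (Fin n)} {d : ℕ} (hn : 4 * t ≤ n)
    (hB : ∀ j ∈ B, ∀ k, ¬ bondIn j (seg (G.s k) t))
    (hlast : (∃ k, G.T k = ∅) → ∀ j ∈ B, j + 1 ≠ 0) (hd : d + 1 ≤ t / 4)
    (hi : i ∈ bondCone B d) : ∃ k, bondIn i (G.T k) := by
  have hdeep : B ⊆ ⋃ a ∈ {a | ∃ k, G.T k = seg a t}, deepBonds a t ((t / 4 - 1 - d) + d) := by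
    intro j hj
    rw [Nat.sub_add_cancel (by omega)]
    obtain ⟨k, a, ha, hja⟩ :=
      G.mem_deepBonds_of_not_bondIn (by omega) hn (hB j hj) fun h => hlast h j hj
    exact Set.mem_iUnion₂.2 ⟨a, ⟨k, ha⟩, hja⟩
  obtain ⟨a, ⟨k, ha⟩, u, -, hu, rfl⟩ := Set.mem_iUnion₂.1 (bondCone_subset_deepBonds hdeep hi)
  exact ⟨k, ha ▸ bondIn_seg (by omega)⟩

end CoarseGraining

end CyclicSegments

section SumOfProjections

variable {𝕜 V ι : Type*} [RCLike 𝕜] [NormedAddCommGroup V] [InnerProductSpace 𝕜 V]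
  [CompleteSpace V] {P : ι → V →L[𝕜] V} {s : Finset ι}

theorem isPositive_sum_of_isStarProjection (hP : ∀ k ∈ s, IsStarProjection (P k)) :
    (∑ k ∈ s, P k).IsPositive :=
  ContinuousLinearMap.isPositive_sum _ fun k hk => .of_isStarProjection (hP k hk)

theorem re_inner_sum_apply_self (hP : ∀ k ∈ s, IsStarProjection (P k)) (x : V) :
    RCLike.re (inner 𝕜 x ((∑ k ∈ s, P k) x)) = ∑ k ∈ s, ‖P k x‖ ^ 2 := by
  rw [sum_apply, inner_sum, map_sum]
  exact Finset.sum_congr rfl fun k hk => re_inner_apply_self_of_isStarProjection (hP k hk) x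

theorem sum_apply_eq_zero_iff_of_isStarProjection (hP : ∀ k ∈ s, IsStarProjection (P k)) {x : V} :
    (∑ k ∈ s, P k) x = 0 ↔ ∀ k ∈ s, P k x = 0 := by
  refine ⟨fun h => ?_, fun h => by rw [sum_apply, Finset.sum_eq_zero h]⟩
  have hsum := re_inner_sum_apply_self hP x
  rw [h, inner_zero_right, map_zero, eq_comm,
    Finset.sum_eq_zero_iff_of_nonneg fun _ _ => by positivity] at hsum
  simpa using hsum

end SumOfProjections

section InvariantSubspaces

variable {𝕜 V : Type*} [RCLike 𝕜] [NormedAddCommGroup V] [InnerProductSpace 𝕜 V]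
  [CompleteSpace V] {X : V →L[𝕜] V} {U : Submodule 𝕜 V}

theorem apply_mem_orthogonal_of_star_apply_mem (hX : ∀ v ∈ U, star X v ∈ U) {x : V}
    (hx : x ∈ Uᗮ) : X x ∈ Uᗮ :=
  ContinuousLinearMap.orthogonal_mem_invtSubmodule hX hx

theorem commute_starProjection_of_isSelfAdjoint [U.HasOrthogonalProjection]
    (hX : IsSelfAdjoint X) (hU : ∀ v ∈ U, X v ∈ U) : Commute X U.starProjection := by
  refine ((ContinuousLinearMap.IsIdempotentElem.commute_iff
    U.isIdempotentElem_starProjection).2 ⟨?_, ?_⟩).symm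
  · rw [Submodule.range_starProjection]
    exact hU
  · rw [Submodule.ker_starProjection]
    exact fun x => apply_mem_orthogonal_of_star_apply_mem (by rwa [hX.star_eq])

end InvariantSubspaces

namespace ChainSetup

variable {n : ℕ} [NeZero n] (C : ChainSetup n E)

section GroundProjections

/-- The indices `(i, j)` of the projectors `P_{ij}`. -/
abbrev Term : Type :=
  (i : Fin n) × Fin (C.m i)

/-- The projectors `P_{ij}`, as a single family indexed by the pairs `(i, j)`. -/
abbrev term (p : C.Term) : E →L[ℂ] E :=
  C.P p.1 p.2

theorem isStarProjection_term (p : C.Term) : IsStarProjection (C.term p) :=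
  (C.proj p.1 p.2).isStarProjection

theorem Hfull_eq_sum_term : C.Hfull = ∑ p, C.term p :=
  (Fintype.sum_sigma' _).symm

theorem hamOn_eq_sum_term (F : Finset (Fin n)) :
    C.hamOn F = ∑ p : C.Term with bondIn p.1 F, C.term p := by
  simp only [hamOn, Hbond, Finset.sum_filter, Fintype.sum_sigma]
  exact Finset.sum_congr rfl fun i _ => by split_ifs <;> simp

theorem isPositive_Hfull : C.Hfull.IsPositive :=
  C.Hfull_eq_sum_term ▸ isPositive_sum_of_isStarProjection fun p _ => C.isStarProjection_term p

theorem re_inner_Hfull_apply_self (x : E) :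
    RCLike.re (inner ℂ x (C.Hfull x)) = ∑ p, ‖C.term p x‖ ^ 2 :=
  C.Hfull_eq_sum_term ▸ re_inner_sum_apply_self (fun p _ => C.isStarProjection_term p) x

theorem mem_ker_Hfull {x : E} :
    x ∈ LinearMap.ker (C.Hfull : E →ₗ[ℂ] E) ↔ ∀ p, C.term p x = 0 := by
  rw [Hfull_eq_sum_term]
  exact (sum_apply_eq_zero_iff_of_isStarProjection
    fun p _ => C.isStarProjection_term p).trans (by simp)

theorem isSelfAdjoint_hamOn (F : Finset (Fin n)) : IsSelfAdjoint (C.hamOn F) := by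
  rw [hamOn_eq_sum_term]
  exact isSelfAdjoint_sum _ fun p _ => (C.isStarProjection_term p).isSelfAdjoint

theorem mem_ker_hamOn {F : Finset (Fin n)} {x : E} :
    x ∈ LinearMap.ker (C.hamOn F : E →ₗ[ℂ] E) ↔ ∀ p : C.Term, bondIn p.1 F → C.term p x = 0 := by
  rw [hamOn_eq_sum_term]
  exact (sum_apply_eq_zero_iff_of_isStarProjection
    fun p _ => C.isStarProjection_term p).trans (by simp)

variable {F F' : Finset (Fin n)}

theorem one_sub_Qproj :
    1 - C.Qproj F = (LinearMap.ker (C.hamOn F : E →ₗ[ℂ] E)).starProjection := by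
  change 1 - (LinearMap.ker (C.hamOn F : E →ₗ[ℂ] E))ᗮ.starProjection = _
  rw [Submodule.starProjection_orthogonal', sub_sub_cancel]

theorem isStarProjection_Qproj (F : Finset (Fin n)) : IsStarProjection (C.Qproj F) :=
  isStarProjection_starProjection

theorem Qproj_apply_eq_zero {x : E} (hx : x ∈ LinearMap.ker (C.Hfull : E →ₗ[ℂ] E)) :
    C.Qproj F x = 0 := by
  have hxF : x ∈ LinearMap.ker (C.hamOn F : E →ₗ[ℂ] E) :=
    C.mem_ker_hamOn.2 fun p _ => C.mem_ker_Hfull.1 hx p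
  simpa [← one_sub_Qproj] using Submodule.starProjection_eq_self_iff.2 hxF

theorem term_mul_one_sub_Qproj {p : C.Term} (hp : bondIn p.1 F) :
    C.term p * (1 - C.Qproj F) = 0 := by
  rw [one_sub_Qproj]
  ext x
  exact C.mem_ker_hamOn.1 (Submodule.starProjection_apply_mem _ x) p hp

theorem commute_Qproj_of_commute_hamOn {X : E →L[ℂ] E} (hX : IsSelfAdjoint X)
    (h : Commute X (C.hamOn F)) : Commute X (C.Qproj F) := by
  rw [← sub_sub_cancel 1 (C.Qproj F), one_sub_Qproj]
  refine (Commute.one_right X).sub_right (commute_starProjection_of_isSelfAdjoint hX ?_)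
  intro v hv
  rw [LinearMap.mem_ker, ContinuousLinearMap.coe_coe] at hv ⊢
  rw [← mul_apply_eq_comp, ← h.eq, mul_apply_eq_comp, hv, map_zero]

theorem commute_hamOn (h : Disjoint F F') : Commute (C.hamOn F) (C.hamOn F') := by
  have bond_subset {i : Fin n} {F : Finset (Fin n)} (hi : bondIn i F) : {i, i + 1} ⊆ F :=
    Finset.insert_subset hi.1 (Finset.singleton_subset_iff.2 hi.2)
  rw [hamOn_eq_sum_term, hamOn_eq_sum_term]
  refine Commute.sum_left _ _ _ fun p hp => Commute.sum_right _ _ _ fun q hq => ?_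
  exact C.locality _ _ _ _ (h.mono (bond_subset (Finset.mem_filter.1 hp).2)
    (bond_subset (Finset.mem_filter.1 hq).2))

theorem commute_Qproj (h : Disjoint F F') : Commute (C.Qproj F) (C.Qproj F') :=
  C.commute_Qproj_of_commute_hamOn (C.isStarProjection_Qproj F).isSelfAdjoint
    (C.commute_Qproj_of_commute_hamOn (C.isSelfAdjoint_hamOn F') (C.commute_hamOn h).symm).symm

variable {M : ℕ} {R : Fin M → Finset (Fin n)}

/-- The product `∏_k (1 - Q_{R_k})` over a family of regions of the chain; for pairwise disjoint
regions it is the projection onto their common ground space. -/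
noncomputable def groundProj (R : Fin M → Finset (Fin n)) : E →L[ℂ] E :=
  complProd (fun k => C.Qproj (R k)) (List.finRange M)

theorem commute_Qproj_of_pairwise (hR : Pairwise fun k l => Disjoint (R k) (R l)) (k l : Fin M) :
    Commute (C.Qproj (R k)) (C.Qproj (R l)) := by
  obtain rfl | hkl := eq_or_ne k l
  · exact Commute.refl _
  · exact C.commute_Qproj (hR hkl)

theorem isStarProjection_groundProj (hR : Pairwise fun k l => Disjoint (R k) (R l)) :
    IsStarProjection (C.groundProj R) :=
  isStarProjection_complProd (fun k _ => C.isStarProjection_Qproj (R k))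
    fun k _ l _ => C.commute_Qproj_of_pairwise hR k l

theorem term_mul_groundProj (hR : Pairwise fun k l => Disjoint (R k) (R l)) {p : C.Term}
    {k : Fin M} (hp : bondIn p.1 (R k)) : C.term p * C.groundProj R = 0 := by
  have absorb : C.Qproj (R k) * C.groundProj R = 0 :=
    mul_complProd_eq_zero (P := fun k => C.Qproj (R k))
      (C.isStarProjection_Qproj (R k)).isIdempotentElem (List.mem_finRange k)
      fun l _ => C.commute_Qproj_of_pairwise hR k l
  calc C.term p * C.groundProj R
      = C.term p * (1 - C.Qproj (R k)) * C.groundProj R := by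
        rw [mul_assoc, sub_mul, absorb, one_mul, sub_zero]
    _ = 0 := by rw [C.term_mul_one_sub_Qproj hp, zero_mul]

theorem groundProj_mul_term (hR : Pairwise fun k l => Disjoint (R k) (R l)) {p : C.Term}
    {k : Fin M} (hp : bondIn p.1 (R k)) : C.groundProj R * C.term p = 0 := by
  simpa [(C.isStarProjection_groundProj hR).isSelfAdjoint.star_eq,
    (C.isStarProjection_term p).isSelfAdjoint.star_eq]
    using congrArg star (C.term_mul_groundProj hR hp)

theorem groundProj_apply_eq_self {x : E} (hx : x ∈ LinearMap.ker (C.Hfull : E →ₗ[ℂ] E)) :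
    C.groundProj R x = x :=
  complProd_apply_eq_self fun _ _ => C.Qproj_apply_eq_zero hx

theorem norm_sq_one_sub_groundProj_apply_le (hR : Pairwise fun k l => Disjoint (R k) (R l))
    (x : E) : ‖(1 - C.groundProj R) x‖ ^ 2 ≤ ∑ k, ‖C.Qproj (R k) x‖ ^ 2 := by
  have union_bound := norm_sq_sub_norm_sq_complProd_apply_le_sum (w := List.finRange M)
    (fun k _ => C.isStarProjection_Qproj (R k))
    (fun k _ l _ => C.commute_Qproj_of_pairwise hR k l) x
  rw [← List.ofFn_eq_map, List.sum_ofFn] at union_bound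
  have := norm_sq_apply_add_norm_sq_one_sub_apply (C.isStarProjection_groundProj hR) x
  rw [groundProj] at this ⊢
  linarith

end GroundProjections

end ChainSetup

theorem noncommProd_one_sub_eq_complProd {A ι : Type*} [Ring A] {P : ι → A} (s : Finset ι)
    (comm : (s : Set ι).Pairwise fun p q => Commute (1 - P p) (1 - P q)) :
    s.noncommProd (fun p => 1 - P p) comm = complProd P s.toList := by
  classical
  have h := Finset.noncommProd_toFinset s.toList (fun p => 1 - P p) (by simpa using comm)
    s.nodup_toList
  simp only [Finset.toList_toFinset] at h
  exact h

theorem mul_aeval_mul_eq_eval_one_smul {𝕜 A : Type*} [CommSemiring 𝕜] [Semiring A] [Algebra 𝕜 A]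
    {a b K : A} {p : Polynomial 𝕜} (h : ∀ j ≤ p.natDegree, a * K ^ j * b = a * b) :
    a * Polynomial.aeval K p * b = p.eval 1 • (a * b) := by
  rw [Polynomial.aeval_eq_sum_range, Polynomial.eval_eq_sum_range, Finset.mul_sum, Finset.sum_mul,
    Finset.sum_smul]
  refine Finset.sum_congr rfl fun j hj => ?_
  rw [mul_smul_comm, smul_mul_assoc, h j (Nat.lt_succ_iff.1 (Finset.mem_range.1 hj)), one_pow,
    mul_one]

namespace ChainSetup

variable {n : ℕ} [NeZero n] (C : ChainSetup n E)

section DetectabilityOperator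

/-- The indices of the projectors in the layer `T_α`, listed in an arbitrary order. -/
noncomputable def layerTerms (α : Fin C.L) : List C.Term :=
  (Finset.univ.filter fun p => C.layer p = α).toList

/-- The factor `∏_{(i,j) ∈ T_α} (1 - P_{ij})` of `DL(H)`. -/
noncomputable def layerProj (α : Fin C.L) : E →L[ℂ] E :=
  complProd C.term (C.layerTerms α)

/-- All the pairs `(i, j)`, in the order in which the factors `1 - P_{ij}` occur in `DL(H)`. -/
noncomputable def layeredWord : List C.Term :=
  (List.finRange C.L).flatMap C.layerTerms

variable {C}

theorem mem_layerTerms {α : Fin C.L} {p : C.Term} : p ∈ C.layerTerms α ↔ C.layer p = α := by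
  simp [layerTerms]

theorem mem_layeredWord (p : C.Term) : p ∈ C.layeredWord := by
  simp [layeredWord, mem_layerTerms]

theorem commute_term_of_mem_layerTerms {α : Fin C.L} {p q : C.Term} (hp : p ∈ C.layerTerms α)
    (hq : q ∈ C.layerTerms α) : Commute (C.term p) (C.term q) :=
  C.layers p q ((mem_layerTerms.1 hp).trans (mem_layerTerms.1 hq).symm)

variable (C)

theorem nodup_layeredWord : C.layeredWord.Nodup := by
  refine List.nodup_flatMap.2 ⟨fun α _ => Finset.nodup_toList _, ?_⟩
  refine (List.nodup_finRange C.L).imp fun {α β} hαβ p hα hβ => hαβ ?_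
  exact (mem_layerTerms.1 hα).symm.trans (mem_layerTerms.1 hβ)

theorem isStarProjection_layerProj (α : Fin C.L) : IsStarProjection (C.layerProj α) :=
  isStarProjection_complProd (fun p _ => C.isStarProjection_term p)
    fun _ hp _ hq => commute_term_of_mem_layerTerms hp hq

theorem DLHam_eq_prod_layerProj : C.DLHam = ((List.finRange C.L).map C.layerProj).prod :=
  congrArg List.prod (List.map_congr_left fun _ _ => noncommProd_one_sub_eq_complProd _ _)

theorem DLHam_eq_complProd : C.DLHam = complProd C.term C.layeredWord :=
  C.DLHam_eq_prod_layerProj.trans (complProd_flatMap _ _).symm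

theorem star_DLHam : star C.DLHam = ((List.finRange C.L).reverse.map C.layerProj).prod := by
  rw [DLHam_eq_prod_layerProj, star_prod_map_of_isSelfAdjoint
    fun α => (C.isStarProjection_layerProj α).isSelfAdjoint]

theorem prod_layerProj_apply_eq_self (ℓ : List (Fin C.L)) {x : E}
    (hx : x ∈ LinearMap.ker (C.Hfull : E →ₗ[ℂ] E)) : (ℓ.map C.layerProj).prod x = x := by
  rw [show (ℓ.map C.layerProj).prod = _ from (complProd_flatMap _ _).symm]
  exact complProd_apply_eq_self fun p _ => C.mem_ker_Hfull.1 hx p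

theorem DLHam_apply_mem_orthogonal_ker {x : E}
    (hx : x ∈ (LinearMap.ker (C.Hfull : E →ₗ[ℂ] E))ᗮ) :
    C.DLHam x ∈ (LinearMap.ker (C.Hfull : E →ₗ[ℂ] E))ᗮ :=
  apply_mem_orthogonal_of_star_apply_mem
    (fun v hv => by rwa [star_DLHam, C.prod_layerProj_apply_eq_self _ hv]) hx

theorem star_DLHam_apply_mem_orthogonal_ker {x : E}
    (hx : x ∈ (LinearMap.ker (C.Hfull : E →ₗ[ℂ] E))ᗮ) :
    star C.DLHam x ∈ (LinearMap.ker (C.Hfull : E →ₗ[ℂ] E))ᗮ :=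
  apply_mem_orthogonal_of_star_apply_mem (fun v hv => by
    rwa [star_star, DLHam_eq_prod_layerProj, C.prod_layerProj_apply_eq_self _ hv]) hx

theorem sum_norm_sq_term_DLHam_apply_le (x : E) :
    ∑ p, ‖C.term p (C.DLHam x)‖ ^ 2 ≤ (C.g : ℝ) ^ 2 * (‖x‖ ^ 2 - ‖C.DLHam x‖ ^ 2) := by
  have degree (p : C.Term) : Nat.card {q : C.Term // ¬ Commute (C.term p) (C.term q)} ≤ C.g := by
    refine (Nat.card_congr (Equiv.subtypeEquivRight fun q => ?_)).trans_le (C.gbound p)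
    exact ⟨fun h => ⟨fun hqp => h (hqp ▸ Commute.refl _), h⟩, And.right⟩
  rw [DLHam_eq_complProd]
  exact detectability_lemma C.isStarProjection_term degree C.nodup_layeredWord mem_layeredWord x

theorem gap_pos (hH0 : C.Hfull ≠ 0) : 0 < C.gap :=
  (minNonzeroEig_mem C.isPositive_Hfull hH0).1

theorem norm_sq_DLHam_apply_le (hH0 : C.Hfull ≠ 0) {x : E}
    (hx : x ∈ (LinearMap.ker (C.Hfull : E →ₗ[ℂ] E))ᗮ) :
    ‖C.DLHam x‖ ^ 2 ≤ (1 - C.gap / ((C.g : ℝ) ^ 2 + C.gap)) * ‖x‖ ^ 2 := by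
  have hγ := C.gap_pos hH0
  have energy : C.gap * ‖C.DLHam x‖ ^ 2 ≤ (C.g : ℝ) ^ 2 * (‖x‖ ^ 2 - ‖C.DLHam x‖ ^ 2) :=
    calc C.gap * ‖C.DLHam x‖ ^ 2
        ≤ RCLike.re (inner ℂ (C.DLHam x) (C.Hfull (C.DLHam x))) :=
          minNonzeroEig_mul_norm_sq_le C.isPositive_Hfull (C.DLHam_apply_mem_orthogonal_ker hx)
      _ = ∑ p, ‖C.term p (C.DLHam x)‖ ^ 2 := C.re_inner_Hfull_apply_self _
      _ ≤ (C.g : ℝ) ^ 2 * (‖x‖ ^ 2 - ‖C.DLHam x‖ ^ 2) := C.sum_norm_sq_term_DLHam_apply_le x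
  rw [one_sub_div (by positivity), add_sub_cancel_right, div_mul_eq_mul_div,
    le_div_iff₀ (by positivity)]
  linarith

theorem norm_aeval_star_mul_DLHam_apply_le (hH0 : C.Hfull ≠ 0) {p : Polynomial ℝ} {c : ℝ}
    (hc : 0 ≤ c)
    (hp : ∀ x ∈ Set.Icc 0 (1 - C.gap / ((C.g : ℝ) ^ 2 + C.gap)), |p.eval x| ≤ c) {x : E}
    (hx : x ∈ (LinearMap.ker (C.Hfull : E →ₗ[ℂ] E))ᗮ) :
    ‖Polynomial.aeval (star C.DLHam * C.DLHam) p x‖ ≤ c * ‖x‖ := by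
  have invariant (v : E) (hv : v ∈ (LinearMap.ker (C.Hfull : E →ₗ[ℂ] E))ᗮ) :
      (star C.DLHam * C.DLHam) v ∈ (LinearMap.ker (C.Hfull : E →ₗ[ℂ] E))ᗮ :=
    C.star_DLHam_apply_mem_orthogonal_ker (C.DLHam_apply_mem_orthogonal_ker hv)
  refine norm_aeval_apply_le (IsSelfAdjoint.star_mul_self _) invariant hc ?_ hx
  rintro y ⟨v, hv, hv0, hvy⟩
  have rayleigh : y * ‖v‖ ^ 2 = ‖C.DLHam v‖ ^ 2 := by
    rw [ContinuousLinearMap.apply_norm_sq_eq_inner_adjoint_right,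
      ← ContinuousLinearMap.star_eq_adjoint, ← ContinuousLinearMap.mul_def, hvy, inner_smul_right]
    simp [inner_self_eq_norm_sq_to_K, ← Complex.ofReal_pow]
  have hv0 : 0 < ‖v‖ ^ 2 := by positivity
  refine hp y ⟨nonneg_of_mul_nonneg_left (rayleigh ▸ by positivity) hv0, ?_⟩
  exact le_of_mul_le_mul_right (rayleigh.trans_le (C.norm_sq_DLHam_apply_le hH0 hv)) hv0

end DetectabilityOperator

end ChainSetup

section CoarseGrainedLightCone

theorem two_mul_sub_one_mul_add_two_le {t L j : ℕ} (hL : 0 < L) (ht : 8 * L ^ 2 < t)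
    (hj : j ≤ ⌈(t : ℝ) / (8 * L)⌉.natAbs) : 2 * (L - 1) * j + 2 ≤ t / 4 := by
  have hj_le : (j : ℝ) ≤ ⌈(t : ℝ) / (8 * L)⌉ := by
    have : (j : ℤ) ≤ ⌈(t : ℝ) / (8 * L)⌉ := by
      have : 0 ≤ ⌈(t : ℝ) / (8 * L)⌉ := by positivity
      omega
    exact_mod_cast this
  have hj_lt : 8 * L * j < t + 8 * L := by
    have : (j : ℝ) < (t + 8 * L) / (8 * L) := by
      rw [add_div, div_self (by positivity)]
      exact hj_le.trans_lt (Int.ceil_lt_add_one _)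
    rw [lt_div_iff₀' (by positivity)] at this
    exact_mod_cast this
  obtain ⟨l, rfl⟩ := Nat.exists_eq_succ_of_ne_zero hL.ne'
  rw [Nat.le_div_iff_mul_le four_pos, Nat.succ_sub_one]
  refine le_of_mul_le_mul_left (a := l + 1) ?_ l.succ_pos
  have : l * (8 * (l + 1) * j + 1) ≤ l * (t + 8 * (l + 1)) := Nat.mul_le_mul_left l hj_lt
  nlinarith

namespace ChainSetup

variable {n t : ℕ} [NeZero n] (C : ChainSetup n E) (G : CoarseGraining n t)

theorem coarseDL_eq : C.coarseDL t G = C.groundProj (fun k => seg (G.s k) t) * C.groundProj G.T :=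
  rfl

theorem term_eq_zero_of_Hbond_eq_zero {p : C.Term} (hp : C.Hbond p.1 = 0) : C.term p = 0 := by
  ext x
  refine (sum_apply_eq_zero_iff_of_isStarProjection (s := Finset.univ) (x := x)
    fun j _ => (C.proj p.1 j).isStarProjection).1 ?_ p.2 (Finset.mem_univ _)
  rw [← Hbond, hp, zero_apply]

/-- The bonds carrying an interaction which the projections `1 - Q_{S_k}` do not absorb. -/
def uncoveredBonds : Set (Fin n) :=
  {j | (∀ k, ¬ bondIn j (seg (G.s k) t)) ∧ C.Hbond j ≠ 0}

theorem groundProj_mul_term_of_notMem_uncoveredBonds {p : C.Term}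
    (hp : p.1 ∉ C.uncoveredBonds G) :
    C.groundProj (fun k => seg (G.s k) t) * C.term p = 0 := by
  by_cases hcover : ∃ k, bondIn p.1 (seg (G.s k) t)
  · exact C.groundProj_mul_term (fun k l => G.hSdisj k l) hcover.choose_spec
  · have hbond : C.Hbond p.1 = 0 := by
      by_contra h
      exact hp ⟨not_exists.1 hcover, h⟩
    rw [C.term_eq_zero_of_Hbond_eq_zero hbond, mul_zero]

variable {G}

theorem add_one_ne_zero_of_mem_uncoveredBonds
    (hopen : C.Hbond ⟨n - 1, Nat.sub_one_lt (NeZero.ne n)⟩ = 0) {j : Fin n}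
    (hj : j ∈ C.uncoveredBonds G) : j + 1 ≠ 0 := by
  intro h
  have hval : ((j : ℕ) + 1) % n = 0 := by
    simpa [Fin.val_add] using congrArg Fin.val h
  have hlast : n ≤ j + 1 := Nat.le_of_dvd j.val.succ_pos (Nat.dvd_of_mod_eq_zero hval)
  refine hj.2 (hopen ▸ congrArg C.Hbond (Fin.ext ?_))
  change (j : ℕ) = n - 1
  omega

theorem groundProj_mul_pow_mul_groundProj (hn : 4 * t ≤ n)
    (hopen : (∃ k, G.T k = ∅) → C.Hbond ⟨n - 1, Nat.sub_one_lt (NeZero.ne n)⟩ = 0) {q : ℕ}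
    (hq : 2 * (C.L - 1) * q + 2 ≤ t / 4) :
    C.groundProj (fun k => seg (G.s k) t) * (star C.DLHam * C.DLHam) ^ q * C.groundProj G.T =
      C.groundProj (fun k => seg (G.s k) t) * C.groundProj G.T := by
  obtain ⟨ℓ, hℓ, hprod⟩ := exists_word_prod_eq_prod_reverse_mul_prod_pow
    (fun α => (C.isStarProjection_layerProj α).isIdempotentElem) (List.finRange C.L) q
  rw [List.length_finRange] at hℓ
  let near (d : ℕ) : Set C.Term := {p | p.1 ∈ bondCone (C.uncoveredBonds G) d}
  have near_commute (d : ℕ) (p) (hp : p ∈ near d) (r) (hr : r ∉ near (d + 1)) :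
      Commute (C.term p) (C.term r) :=
    C.locality _ _ _ _ (disjoint_of_notMem_bondCone hp hr)
  have absorb_right (p) (hp : p ∈ near ℓ.length) : C.term p * C.groundProj G.T = 0 := by
    obtain ⟨k, hk⟩ := G.exists_bondIn_T_of_mem_bondCone hn (fun j hj => hj.1)
      (fun h j hj => C.add_one_ne_zero_of_mem_uncoveredBonds (hopen h) hj) (by omega) hp
    exact C.term_mul_groundProj (fun k l => G.hTdisj k l) hk
  rw [star_DLHam, DLHam_eq_prod_layerProj, ← hprod]
  exact mul_prod_layers_mul_eq (P := C.term) (Y := C.layerTerms) (near := near)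
    (fun α p hp q hq => commute_term_of_mem_layerTerms hp hq)
    (fun d e hde p hp => monotone_bondCone _ hde hp) near_commute
    (fun p hp => C.groundProj_mul_term_of_notMem_uncoveredBonds G hp) ℓ absorb_right

theorem coarseDL_eq_mul_aeval_mul (hn : 4 * t ≤ n)
    (hopen : (∃ k, G.T k = ∅) → C.Hbond ⟨n - 1, Nat.sub_one_lt (NeZero.ne n)⟩ = 0)
    {p : Polynomial ℝ} (hp : p.eval 1 = 1)
    (hdeg : ∀ j ≤ p.natDegree, 2 * (C.L - 1) * j + 2 ≤ t / 4) :
    C.coarseDL t G = C.groundProj (fun k => seg (G.s k) t) *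
      Polynomial.aeval (star C.DLHam * C.DLHam) p * C.groundProj G.T := by
  rw [mul_aeval_mul_eq_eval_one_smul fun j hj =>
    C.groundProj_mul_pow_mul_groundProj hn hopen (hdeg j hj), hp, one_smul, coarseDL_eq]

end ChainSetup

end CoarseGrainedLightCone

section ChebyshevStep

open Polynomial

/-- The function `step_{m,ν}` as an element of `ℝ[X]`, to be evaluated at operators. -/
noncomputable def stepPolynomial (m ν : ℝ) : ℝ[X] :=
  C ((Chebyshev.T ℝ ⌈m⌉).eval ((1 + ν) / (1 - ν)))⁻¹ *
    (Chebyshev.T ℝ ⌈m⌉).comp (C (2 / (1 - ν)) * X + C (-1))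

variable {m ν x : ℝ}

theorem eval_stepPolynomial : (stepPolynomial m ν).eval x = stepPoly m ν x := by
  simp only [stepPolynomial, stepPoly, eval_mul, eval_C, eval_comp, eval_add, eval_X]
  rw [show 2 / (1 - ν) * x + -1 = -1 + 2 * x / (1 - ν) by ring, mul_comm, ← div_eq_mul_inv]

theorem natDegree_stepPolynomial_le : (stepPolynomial m ν).natDegree ≤ ⌈m⌉.natAbs :=
  calc (stepPolynomial m ν).natDegree
      ≤ (Chebyshev.T ℝ ⌈m⌉).natDegree * (C (2 / (1 - ν)) * X + C (-1)).natDegree :=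
        (natDegree_C_mul_le _ _).trans natDegree_comp_le
    _ ≤ ⌈m⌉.natAbs * 1 := by
        rw [Chebyshev.natDegree_T]
        exact Nat.mul_le_mul_left _ natDegree_linear_le
    _ = ⌈m⌉.natAbs := mul_one _

theorem one_le_eval_T_one_add_div_one_sub (hν0 : 0 ≤ ν) (hν1 : ν < 1) (k : ℤ) :
    1 ≤ (Chebyshev.T ℝ k).eval ((1 + ν) / (1 - ν)) := by
  refine Chebyshev.one_le_eval_T_real k ?_
  rw [one_le_div (by linarith)]
  linarith

theorem stepPoly_one (hν0 : 0 ≤ ν) (hν1 : ν < 1) : stepPoly m ν 1 = 1 := by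
  have hν : 1 - ν ≠ 0 := by linarith
  have node : -1 + 2 * 1 / (1 - ν) = (1 + ν) / (1 - ν) := by
    field_simp
    ring
  rw [stepPoly, node]
  exact div_self (zero_lt_one.trans_le (one_le_eval_T_one_add_div_one_sub hν0 hν1 _)).ne'

theorem stepPoly_one_sub_self (hν : ν ≠ 1) :
    stepPoly m ν (1 - ν) = ((Chebyshev.T ℝ ⌈m⌉).eval ((1 + ν) / (1 - ν)))⁻¹ := by
  have node : -1 + 2 * (1 - ν) / (1 - ν) = 1 := by
    rw [mul_div_cancel_right₀ _ (sub_ne_zero.2 hν.symm)]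
    norm_num
  rw [stepPoly, node, Chebyshev.T_eval_one, one_div]

theorem stepPoly_one_sub_self_mem_Ioc (hν0 : 0 ≤ ν) (hν1 : ν < 1) :
    stepPoly m ν (1 - ν) ∈ Set.Ioc 0 1 := by
  have h := one_le_eval_T_one_add_div_one_sub hν0 hν1 ⌈m⌉
  rw [stepPoly_one_sub_self hν1.ne]
  exact ⟨inv_pos.2 (zero_lt_one.trans_le h), inv_le_one_of_one_le₀ h⟩

theorem abs_stepPoly_le (hν0 : 0 ≤ ν) (hν1 : ν < 1) (hx : x ∈ Set.Icc 0 (1 - ν)) :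
    |stepPoly m ν x| ≤ stepPoly m ν (1 - ν) := by
  have hν : 0 < 1 - ν := by linarith
  have node : |-1 + 2 * x / (1 - ν)| ≤ 1 := by
    have : 2 * x / (1 - ν) ≤ 2 := (div_le_iff₀ hν).2 (by linarith [hx.2])
    have : 0 ≤ 2 * x / (1 - ν) := div_nonneg (by linarith [hx.1]) hν.le
    exact abs_le.2 ⟨by linarith, by linarith⟩
  have denom := zero_le_one.trans (one_le_eval_T_one_add_div_one_sub hν0 hν1 ⌈m⌉)
  rw [stepPoly_one_sub_self hν1.ne, stepPoly, abs_div, abs_of_nonneg denom, ← one_div]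
  exact div_le_div_of_nonneg_right (Chebyshev.abs_eval_T_real_le_one _ node) denom

theorem stepPoly_one_sub_self_le_sSup (hν0 : 0 ≤ ν) (hν1 : ν < 1) :
    stepPoly m ν (1 - ν) ≤
      sSup {y : ℝ | ∃ x ∈ Set.Ioo (0 : ℝ) (1 - ν), y = stepPoly m ν x} := by
  have bounded : BddAbove {y : ℝ | ∃ x ∈ Set.Ioo (0 : ℝ) (1 - ν), y = stepPoly m ν x} := by
    refine ⟨stepPoly m ν (1 - ν), ?_⟩
    rintro _ ⟨x, hx, rfl⟩
    exact (le_abs_self _).trans (abs_stepPoly_le hν0 hν1 (Set.Ioo_subset_Icc_self hx))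
  have continuous : Continuous (stepPoly m ν) := by
    simpa only [eval_stepPolynomial] using (stepPolynomial m ν).continuous
  refine le_of_tendsto (continuous.continuousWithinAt (s := Set.Iio (1 - ν))) ?_
  filter_upwards [Ioo_mem_nhdsLT (sub_pos.2 hν1)] with x hx
  exact le_csSup bounded ⟨x, hx, rfl⟩

end ChebyshevStep

namespace ChainSetup

variable {n t : ℕ} [NeZero n] (C : ChainSetup n E) (G : CoarseGraining n t)

section LowerBound

theorem coarseHam_eq_add :
    C.coarseHam t G = ∑ k, C.Qproj (seg (G.s k) t) + ∑ k, C.Qproj (G.T k) :=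
  Finset.sum_add_distrib

theorem isPositive_coarseHam : (C.coarseHam t G).IsPositive := by
  rw [coarseHam_eq_add]
  exact (isPositive_sum_of_isStarProjection fun k _ => C.isStarProjection_Qproj _).add
    (isPositive_sum_of_isStarProjection fun k _ => C.isStarProjection_Qproj _)

theorem re_inner_coarseHam_apply_self (x : E) :
    RCLike.re (inner ℂ x (C.coarseHam t G x)) =
      ∑ k, ‖C.Qproj (seg (G.s k) t) x‖ ^ 2 + ∑ k, ‖C.Qproj (G.T k) x‖ ^ 2 := by
  rw [coarseHam_eq_add, add_apply, inner_add_right, map_add,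
    re_inner_sum_apply_self fun k _ => C.isStarProjection_Qproj _,
    re_inner_sum_apply_self fun k _ => C.isStarProjection_Qproj _]

theorem ker_Hfull_le_ker_coarseHam :
    LinearMap.ker (C.Hfull : E →ₗ[ℂ] E) ≤ LinearMap.ker (C.coarseHam t G : E →ₗ[ℂ] E) := by
  intro x hx
  change C.coarseHam t G x = 0
  simp [coarseHam, C.Qproj_apply_eq_zero hx]

theorem norm_sq_sub_norm_sq_coarseDL_apply_le (x : E) :
    ‖x‖ ^ 2 - ‖C.coarseDL t G x‖ ^ 2 ≤
      3 * RCLike.re (inner ℂ x (C.coarseHam t G x)) := by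
  have hS : Pairwise fun k l => Disjoint (seg (G.s k) t) (seg (G.s l) t) := fun k l => G.hSdisj k l
  have hT : Pairwise fun k l => Disjoint (G.T k) (G.T l) := fun k l => G.hTdisj k l
  calc ‖x‖ ^ 2 - ‖C.coarseDL t G x‖ ^ 2
      ≤ 3 * (‖(1 - C.groundProj fun k => seg (G.s k) t) x‖ ^ 2 +
          ‖(1 - C.groundProj G.T) x‖ ^ 2) :=
        norm_sq_sub_norm_sq_mul_apply_le (C.isStarProjection_groundProj hS)
          (C.isStarProjection_groundProj hT) x
    _ ≤ 3 * RCLike.re (inner ℂ x (C.coarseHam t G x)) := by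
        rw [re_inner_coarseHam_apply_self]
        gcongr
        · exact C.norm_sq_one_sub_groundProj_apply_le hS x
        · exact C.norm_sq_one_sub_groundProj_apply_le hT x

theorem exists_one_sub_three_mul_minNonzeroEig_coarseHam_le (hH0 : C.Hfull ≠ 0) :
    ∃ ψ ∈ (LinearMap.ker (C.Hfull : E →ₗ[ℂ] E))ᗮ, ‖ψ‖ = 1 ∧
      1 - 3 * minNonzeroEig (C.coarseHam t G) ≤ ‖C.coarseDL t G ψ‖ ^ 2 := by
  have hker : LinearMap.ker (C.Hfull : E →ₗ[ℂ] E) ≠ ⊤ := fun h =>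
    hH0 (ContinuousLinearMap.coe_injective (LinearMap.ker_eq_top.1 h))
  obtain ⟨ψ, hψ, hψ1, eigen⟩ := exists_norm_eq_one_apply_eq_minNonzeroEig_smul
    (C.isPositive_coarseHam G) (C.ker_Hfull_le_ker_coarseHam G) hker
  refine ⟨ψ, hψ, hψ1, ?_⟩
  have energy : RCLike.re (inner ℂ ψ (C.coarseHam t G ψ)) = minNonzeroEig (C.coarseHam t G) := by
    rw [eigen, inner_smul_right, inner_self_eq_norm_sq_to_K, hψ1]
    simp
  have := C.norm_sq_sub_norm_sq_coarseDL_apply_le G ψ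
  rw [energy, hψ1] at this
  linarith

theorem norm_coarseDL_apply_le (x : E) : ‖C.coarseDL t G x‖ ≤ ‖x‖ :=
  (norm_apply_le_of_isStarProjection
    (C.isStarProjection_groundProj fun k l => G.hSdisj k l) _).trans
    (norm_apply_le_of_isStarProjection
      (C.isStarProjection_groundProj fun k l => G.hTdisj k l) x)

end LowerBound

section UpperBound

variable {G}

theorem L_pos (hH0 : C.Hfull ≠ 0) : 0 < C.L := by
  by_contra hL
  have : IsEmpty C.Term := ⟨fun p => hL (C.layer p).pos⟩
  exact hH0 (by rw [Hfull_eq_sum_term, Finset.univ_eq_empty, Finset.sum_empty])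

theorem gap_div_mem_Ioo (hH0 : C.Hfull ≠ 0) (hg : 0 < C.g) :
    C.gap / ((C.g : ℝ) ^ 2 + C.gap) ∈ Set.Ioo 0 1 := by
  have hγ := C.gap_pos hH0
  have hg2 : (0 : ℝ) < (C.g : ℝ) ^ 2 := by positivity
  exact ⟨by positivity, (div_lt_one (by positivity)).2 (by linarith)⟩

theorem groundProj_apply_mem_orthogonal_ker {M : ℕ} {R : Fin M → Finset (Fin n)}
    (hR : Pairwise fun k l => Disjoint (R k) (R l)) {x : E}
    (hx : x ∈ (LinearMap.ker (C.Hfull : E →ₗ[ℂ] E))ᗮ) :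
    C.groundProj R x ∈ (LinearMap.ker (C.Hfull : E →ₗ[ℂ] E))ᗮ :=
  apply_mem_orthogonal_of_star_apply_mem (fun v hv => by
    rwa [(C.isStarProjection_groundProj hR).isSelfAdjoint.star_eq,
      C.groundProj_apply_eq_self hv]) hx

theorem norm_coarseDL_apply_le_of_eval_one (hn : 4 * t ≤ n)
    (hopen : (∃ k, G.T k = ∅) → C.Hbond ⟨n - 1, Nat.sub_one_lt (NeZero.ne n)⟩ = 0)
    (hH0 : C.Hfull ≠ 0) {p : Polynomial ℝ} {c : ℝ} (hp1 : p.eval 1 = 1)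
    (hdeg : ∀ j ≤ p.natDegree, 2 * (C.L - 1) * j + 2 ≤ t / 4)
    (hc : 0 ≤ c)
    (hp : ∀ x ∈ Set.Icc 0 (1 - C.gap / ((C.g : ℝ) ^ 2 + C.gap)), |p.eval x| ≤ c) {x : E}
    (hx : x ∈ (LinearMap.ker (C.Hfull : E →ₗ[ℂ] E))ᗮ) :
    ‖C.coarseDL t G x‖ ≤ c * ‖x‖ := by
  have hT : Pairwise fun k l => Disjoint (G.T k) (G.T l) := fun k l => G.hTdisj k l
  rw [C.coarseDL_eq_mul_aeval_mul hn hopen hp1 hdeg]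
  calc ‖C.groundProj (fun k => seg (G.s k) t)
        (Polynomial.aeval (star C.DLHam * C.DLHam) p (C.groundProj G.T x))‖
      ≤ ‖Polynomial.aeval (star C.DLHam * C.DLHam) p (C.groundProj G.T x)‖ :=
        norm_apply_le_of_isStarProjection
          (C.isStarProjection_groundProj fun k l => G.hSdisj k l) _
    _ ≤ c * ‖C.groundProj G.T x‖ :=
        C.norm_aeval_star_mul_DLHam_apply_le hH0 hc hp (C.groundProj_apply_mem_orthogonal_ker hT hx)
    _ ≤ c * ‖x‖ := by
        gcongr
        exact norm_apply_le_of_isStarProjection (C.isStarProjection_groundProj hT) x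

theorem norm_coarseDL_apply_le_stepPoly (ht : 8 * C.L ^ 2 < t) (hn : 4 * t ≤ n)
    (hopen : (∃ k, G.T k = ∅) → C.Hbond ⟨n - 1, Nat.sub_one_lt (NeZero.ne n)⟩ = 0)
    (hH0 : C.Hfull ≠ 0) (hg : 0 < C.g) {x : E}
    (hx : x ∈ (LinearMap.ker (C.Hfull : E →ₗ[ℂ] E))ᗮ) :
    ‖C.coarseDL t G x‖ ≤ stepPoly (t / (8 * C.L)) (C.gap / ((C.g : ℝ) ^ 2 + C.gap))
      (1 - C.gap / ((C.g : ℝ) ^ 2 + C.gap)) * ‖x‖ := by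
  obtain ⟨hν0, hν1⟩ := C.gap_div_mem_Ioo hH0 hg
  refine C.norm_coarseDL_apply_le_of_eval_one hn hopen hH0 (p := stepPolynomial (t / (8 * C.L)) _)
    (eval_stepPolynomial.trans (stepPoly_one hν0.le hν1)) (fun j hj => ?_)
    (stepPoly_one_sub_self_mem_Ioc hν0.le hν1).1.le (fun y hy => ?_) hx
  · exact two_mul_sub_one_mul_add_two_le (C.L_pos hH0) ht (hj.trans natDegree_stepPolynomial_le)
  · exact eval_stepPolynomial.symm ▸ abs_stepPoly_le hν0.le hν1 hy

end UpperBound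

end ChainSetup

/-- for a frustration-free chain Hamiltonian as in the setup, with spectral
gap `γ`, noncommutation degree `g`, `L` layers, coarse-grained Hamiltonian `H̄(t)` and
coarse-grained detectability operator `DL(t)` for `8L² < t < n/5`:
`1 − 3γ(H̄(t)) ≤ max_{ψ ∈ G⊥, ‖ψ‖=1} ‖DL(t)ψ‖² ≤ max_{x ∈ (0, 1−γ/(g²+γ))} step_{t/(8L), γ/(g²+γ)}(x)`. -/
theorem stmt_13 {n : ℕ} [NeZero n] (C : ChainSetup n E)
    (t : ℕ) (ht1 : 8 * C.L ^ 2 < t) (ht2 : 5 * t < n)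
    (G : CoarseGraining n t)
    (hopen : (∃ k, G.T k = ∅) → C.Hbond ⟨n - 1, by omega⟩ = 0)
    (hH0 : C.Hfull ≠ 0) (hg : 0 < C.g) :
    1 - 3 * minNonzeroEig (C.coarseHam t G) ≤
      sSup {x : ℝ | ∃ ψ : E, ‖ψ‖ = 1 ∧ ψ ∈ (LinearMap.ker (C.Hfull : E →ₗ[ℂ] E))ᗮ ∧
        x = ‖C.coarseDL t G ψ‖ ^ 2} ∧
    sSup {x : ℝ | ∃ ψ : E, ‖ψ‖ = 1 ∧ ψ ∈ (LinearMap.ker (C.Hfull : E →ₗ[ℂ] E))ᗮ ∧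
        x = ‖C.coarseDL t G ψ‖ ^ 2} ≤
      sSup {y : ℝ | ∃ x ∈ Set.Ioo (0 : ℝ) (1 - C.gap / ((C.g : ℝ) ^ 2 + C.gap)),
        y = stepPoly ((t : ℝ) / (8 * C.L)) (C.gap / ((C.g : ℝ) ^ 2 + C.gap)) x} := by
  constructor
  · obtain ⟨ψ, hψ, hψ1, le_norm⟩ := C.exists_one_sub_three_mul_minNonzeroEig_coarseHam_le G hH0
    refine le_norm.trans (le_csSup ⟨1, ?_⟩ ⟨ψ, hψ1, hψ, rfl⟩)
    rintro _ ⟨φ, hφ1, -, rfl⟩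
    exact pow_le_one₀ (norm_nonneg _) (hφ1 ▸ C.norm_coarseDL_apply_le G φ)
  · obtain ⟨hν0, hν1⟩ := C.gap_div_mem_Ioo hH0 hg
    have step_mem := stepPoly_one_sub_self_mem_Ioc (m := t / (8 * C.L)) hν0.le hν1
    refine (Real.sSup_le ?_ step_mem.1.le).trans (stepPoly_one_sub_self_le_sSup hν0.le hν1)
    rintro _ ⟨ψ, hψ1, hψ, rfl⟩
    have norm_le := C.norm_coarseDL_apply_le_stepPoly ht1 (by omega) hopen hH0 hg hψ
    rw [hψ1, mul_one] at norm_le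
    exact (pow_le_of_le_one (norm_nonneg _) (norm_le.trans step_mem.2) two_ne_zero).trans norm_le
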